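/- arXiv:1906.09131 — 6 statements merged into one kernel-verified Lean document; each statement's English description precedes it below -/
import Mathlib

section
/- If 𝔄 is any structure interpreting Σ ∪ {t} in which t is transitive, then the pair C(𝔄) = (S, ≪), where S is the set of super-types realized in 𝔄 and π ≪ π' holds iff π and π' are realized in 𝔄 and 𝔄 ⊨ ∀x(π → ∀y(π'(y) → t(x,y))), is a certificate: ≪ is transitive and conditions (C1) and (C2) hold. -/
/- STATEMENT 1: The certificate of a structure is a certificate. -/

namespace FlutedCertificates

/-- A 1-type over the unary signature `Sig` (a maximal consistent conjunction of unary
literals, identified with a truth-value assignment to the unary predicates). -/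
abbrev OneType (Sig : Type) := Sig → Prop

/-- A structure interpreting the unary signature `Sig` together with the distinguished
binary predicate `t`. -/
structure Str (Sig : Type) (A : Type) where
  P : Sig → A → Prop
  T : A → A → Prop

/-- The 1-type of an element. -/
def Str.tp {Sig A : Type} (M : Str Sig A) (a : A) : OneType Sig :=
  fun p => M.P p a

/-- A super-type over `Sig`: a pair of a 1-type and a set of 1-types. -/
abbrev SuperType (Sig : Type) := OneType Sig × Set (OneType Sig)

/-- The super-type of an element: its 1-type together with the 1-types of the
elements to which it is `t`-related. -/
def Str.stp {Sig A : Type} (M : Str Sig A) (a : A) : SuperType Sig :=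
  (M.tp a, { π | ∃ b, M.T a b ∧ M.tp b = π })

/-- `tp(S)`: the 1-types occurring as first components of super-types in `S`. -/
def tps {Sig : Type} (S : Set (SuperType Sig)) : Set (OneType Sig) :=
  { π | ∃ Ps, (π, Ps) ∈ S }

/-- A certificate: a set `S` of super-types together with a transitive relation `≪` on
`tp(S)` satisfying conditions (C1) and (C2). -/
structure IsCertificate {Sig : Type} (S : Set (SuperType Sig))
    (ll : OneType Sig → OneType Sig → Prop) : Prop where
  trans : Transitive ll
  rel_on_tps : ∀ π π', ll π π' → π ∈ tps S ∧ π' ∈ tps S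
  C1 : ∀ π Ps, (π, Ps) ∈ S → ∀ π' ∈ Ps, ∃ Ps', (π', Ps') ∈ S ∧ Ps' ⊆ Ps
  C2 : ∀ π π' Ps Ps', ll π π' → (π, Ps) ∈ S → (π', Ps') ∈ S → insert π' Ps' ⊆ Ps

/-- The set of super-types realized in `𝔄`. -/
def certS {Sig A : Type} (M : Str Sig A) : Set (SuperType Sig) :=
  Set.range M.stp

/-- The relation `≪` of the certificate of `𝔄`: `π ≪ π'` iff `π` and `π'` are realized
in `𝔄` and `𝔄 ⊨ ∀x(π → ∀y(π'(y) → t(x,y)))`. -/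
def certLL {Sig A : Type} (M : Str Sig A) (π π' : OneType Sig) : Prop :=
  (∃ a, M.tp a = π) ∧ (∃ b, M.tp b = π') ∧
    ∀ a b, M.tp a = π → M.tp b = π' → M.T a b

section

variable {Sig A : Type} {M : Str Sig A}

/- Everything a `t`-successor `b` of `a` sees, `a` sees too. Both (C1) and (C2) are instances: in
(C1) `b` witnesses `π' ∈ Π`, in (C2) `π ≪ π'` supplies the edge from `a` to `b`. -/
theorem Str.insert_tp_stp_snd_subset [IsTrans A M.T] {a b : A} (hab : M.T a b) :
    insert (M.tp b) (M.stp b).2 ⊆ (M.stp a).2 :=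
  Set.insert_subset ⟨b, hab, rfl⟩ fun _ ⟨c, hbc, hc⟩ => ⟨c, _root_.trans hab hbc, hc⟩

variable (M) in
theorem tps_certS : tps (certS M) = Set.range M.tp := by
  ext π
  constructor
  · rintro ⟨_, a, ha⟩
    exact ⟨a, congrArg Prod.fst ha⟩
  · rintro ⟨a, rfl⟩
    exact ⟨_, a, rfl⟩

instance isTrans_certLL [IsTrans A M.T] : IsTrans (OneType Sig) (certLL M) where
  trans := by
    rintro π π' π'' ⟨hπ, ⟨b, hb⟩, hππ'⟩ ⟨_, hπ'', hπ'π''⟩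
    exact ⟨hπ, hπ'', fun a c ha hc => _root_.trans (hππ' a b ha hb) (hπ'π'' b c hb hc)⟩

theorem exists_mem_certS_subset [IsTrans A M.T] {π π' : OneType Sig}
    {Ps : Set (OneType Sig)} (hS : (π, Ps) ∈ certS M) (hπ' : π' ∈ Ps) :
    ∃ Ps', (π', Ps') ∈ certS M ∧ Ps' ⊆ Ps := by
  obtain ⟨a, ⟨⟩⟩ := hS
  obtain ⟨b, hab, rfl⟩ := hπ'
  exact ⟨(M.stp b).2, ⟨b, rfl⟩,
    (Set.subset_insert _ _).trans (Str.insert_tp_stp_snd_subset hab)⟩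

theorem insert_subset_of_certLL [IsTrans A M.T] {π π' : OneType Sig}
    {Ps Ps' : Set (OneType Sig)} (hll : certLL M π π') (hS : (π, Ps) ∈ certS M)
    (hS' : (π', Ps') ∈ certS M) : insert π' Ps' ⊆ Ps := by
  obtain ⟨a, ⟨⟩⟩ := hS
  obtain ⟨b, ⟨⟩⟩ := hS'
  obtain ⟨_, _, hT⟩ := hll
  exact Str.insert_tp_stp_snd_subset (hT a b rfl rfl)

end

/-- Lemma 2.  If `𝔄` is any structure interpreting `Σ ∪ {t}` in which
`t` is transitive, then `C(𝔄) = (S, ≪)` is a certificate. -/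
theorem certificate_of_structure {Sig A : Type} (M : Str Sig A)
    (htrans : Transitive M.T) :
    IsCertificate (certS M) (certLL M) := by
  have : IsTrans A M.T := ⟨@htrans⟩
  exact {
    trans := IsTrans.trans
    rel_on_tps := fun _ _ hll => by
      rw [tps_certS]
      exact ⟨hll.1, hll.2.1⟩
    C1 := fun _ _ hS _ hπ' => exists_mem_certS_subset hS hπ'
    C2 := fun _ _ _ _ hll hS hS' => insert_subset_of_certLL hll hS hS' }

end FlutedCertificates
end

section
/- If C = (S, ≪) is a certificate, then there exists a structure 𝔄 interpreting Σ ∪ {t} with t transitive, over a domain of cardinality 2|S|, such that for every basic FL²1T^u-formula ψ over Σ ∪ {t}, C ⊨ ψ implies 𝔄 ⊨ ψ. -/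
/- STATEMENT 3: From a certificate one can build a structure of cardinality 2·|S|
satisfying all basic formulas that the certificate satisfies. -/

namespace FlutedCertificates

/-- Quantifier-free formulas over the unary signature `Sig`, in a single variable. -/
inductive QF (Sig : Type) : Type
  | atom (p : Sig) : QF Sig
  | fls : QF Sig
  | not (φ : QF Sig) : QF Sig
  | and (φ ψ : QF Sig) : QF Sig
  | or (φ ψ : QF Sig) : QF Sig

def QF.eval {Sig : Type} (v : Sig → Prop) : QF Sig → Prop
  | .atom p => v p
  | .fls => False
  | .not φ => ¬ QF.eval v φ
  | .and φ ψ => QF.eval v φ ∧ QF.eval v ψ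
  | .or φ ψ => QF.eval v φ ∨ QF.eval v ψ

/-- Basic FL²1Tᵘ-formulas: `∃x.μ`, `∀x.μ`, `∀x(π → ∃y(μ(y) ∧ ±t(x,y)))` and
`∀x(π → ∀y(π'(y) → ±t(x,y)))`. -/
inductive Basic (Sig : Type) : Type
  | exQF (μ : QF Sig)
  | allQF (μ : QF Sig)
  | allExT (π : OneType Sig) (μ : QF Sig) (sign : Bool)
  | allAllT (π π' : OneType Sig) (sign : Bool)

/-- Satisfaction of a basic formula in a structure. -/
def StrSat {Sig A : Type} (M : Str Sig A) : Basic Sig → Prop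
  | .exQF μ => ∃ a : A, μ.eval (M.tp a)
  | .allQF μ => ∀ a : A, μ.eval (M.tp a)
  | .allExT π μ s => ∀ a : A, M.tp a = π →
      ∃ b : A, μ.eval (M.tp b) ∧ (if s then M.T a b else ¬ M.T a b)
  | .allAllT π π' s => ∀ a : A, M.tp a = π → ∀ b : A, M.tp b = π' →
      (if s then M.T a b else ¬ M.T a b)

/-- Satisfaction of a basic formula by a certificate `(S, ≪)` (conditions (i)–(vi)). -/
def CertSat {Sig : Type} (S : Set (SuperType Sig))
    (ll : OneType Sig → OneType Sig → Prop) : Basic Sig → Prop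
  | .exQF μ => ∃ π ∈ tps S, μ.eval π
  | .allQF μ => ∀ π ∈ tps S, μ.eval π
  | .allExT π μ true => ∀ Ps, (π, Ps) ∈ S → ∃ π' ∈ Ps, μ.eval π'
  | .allExT π μ false => ∀ Ps, (π, Ps) ∈ S →
      ∃ π' Ps', (π', Ps') ∈ S ∧ μ.eval π' ∧ ¬ ∃ α ∈ insert π Ps, ll α π'
  | .allAllT π π' true => π ∈ tps S → π' ∈ tps S → ll π π'
  | .allAllT π π' false => ∀ Ps, (π, Ps) ∈ S → π' ∉ Ps

/-
Take two copies of every super-type in `S`. An edge from a copy of `⟨π, Π⟩` to a copy of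
`⟨π', Π'⟩` must respect `{π'} ∪ Π' ⊆ Π`: this keeps the 1-types seen from the source inside `Π`
and makes transitivity possible. Edges into the first copy are drawn whenever this inclusion
holds, so first copies witness the formulas `∃y(μ(y) ∧ t(x,y))`. Edges into the second copy are
drawn only when `α ≪ π'` for some `α ∈ {π} ∪ Π`, so second copies witness the formulas
`∃y(μ(y) ∧ ¬t(x,y))`. By (C1) and (C2), the latter edges respect the inclusion as well.
-/

/-- The 1-types mentioned by a super-type: `{π} ∪ Π` for `⟨π, Π⟩`. -/
def SuperType.types {Sig : Type} (σ : SuperType Sig) : Set (OneType Sig) :=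
  insert σ.1 σ.2

/-- `τ` is forced by `σ = ⟨π, Π⟩` if some `α ∈ {π} ∪ Π` satisfies `α ≪ π'`, where `π'` is the
1-type of `τ`. If `α ≪ π'` is read as `∀x(α → ∀y(π'(y) → t(x,y)))`, transitivity of `t` then
makes every element realizing `σ` be `t`-related to every element realizing `τ`. -/
def Forces {Sig : Type} (ll : OneType Sig → OneType Sig → Prop) (σ τ : SuperType Sig) : Prop :=
  ∃ α ∈ σ.types, ll α τ.1

/-- A set of super-types and an arbitrary relation on 1-types that together satisfy (C1)
and (C2). -/
structure IsPrecertificate {Sig : Type} (S : Set (SuperType Sig))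
    (ll : OneType Sig → OneType Sig → Prop) : Prop where
  exists_subset : ∀ σ ∈ S, ∀ π ∈ σ.2, ∃ Ps, (π, Ps) ∈ S ∧ Ps ⊆ σ.2
  types_subset_of_ll : ∀ σ ∈ S, ∀ τ ∈ S, ll σ.1 τ.1 → τ.types ⊆ σ.2

/-- The structure over two copies of `S` in which every element has the 1-type of its super-type.
The copies tagged `true` receive all edges compatible with the super-types, the copies tagged
`false` only the forced ones. -/
def doubling {Sig : Type} (S : Set (SuperType Sig)) (ll : OneType Sig → OneType Sig → Prop) :
    Str Sig (Bool × S) where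
  P p a := a.2.1.1 p
  T a b := (b.1 = true ∧ b.2.1.types ⊆ a.2.1.2) ∨ Forces ll a.2 b.2

section

variable {Sig : Type} {S : Set (SuperType Sig)} {ll : OneType Sig → OneType Sig → Prop}

theorem Forces.of_types_subset {σ τ υ : SuperType Sig} (hτυ : Forces ll τ υ)
    (hστ : τ.types ⊆ σ.2) : Forces ll σ υ :=
  let ⟨α, hα, hαυ⟩ := hτυ
  ⟨α, Set.mem_insert_of_mem _ (hστ hα), hαυ⟩

theorem IsCertificate.isPrecertificate (hC : IsCertificate S ll) : IsPrecertificate S ll where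
  exists_subset _ hσ := hC.C1 _ _ hσ
  types_subset_of_ll _ hσ _ hτ hll := hC.C2 _ _ _ _ hll hσ hτ

theorem IsPrecertificate.types_subset_of_forces (hC : IsPrecertificate S ll) {σ τ : SuperType Sig}
    (hσ : σ ∈ S) (hτ : τ ∈ S) (h : Forces ll σ τ) : τ.types ⊆ σ.2 := by
  obtain ⟨α, rfl | hα, hατ⟩ := h
  · exact hC.types_subset_of_ll σ hσ τ hτ hατ
  · obtain ⟨Ps, hPs, hsub⟩ := hC.exists_subset σ hσ α hα
    exact (hC.types_subset_of_ll (α, Ps) hPs τ hτ hατ).trans hsub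

namespace doubling

theorem range_tp : Set.range (doubling S ll).tp = tps S := by
  ext π
  constructor
  · rintro ⟨a, rfl⟩
    exact ⟨_, a.2.2⟩
  · rintro ⟨Ps, hPs⟩
    exact ⟨(true, ⟨(π, Ps), hPs⟩), rfl⟩

theorem T_of_ll {a b : Bool × S} (h : ll ((doubling S ll).tp a) ((doubling S ll).tp b)) :
    (doubling S ll).T a b :=
  Or.inr ⟨_, Set.mem_insert _ _, h⟩

theorem T_false_iff {a : Bool × S} {τ : S} :
    (doubling S ll).T a (false, τ) ↔ Forces ll a.2 τ := by
  simp [doubling]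

theorem types_subset_of_T (hC : IsPrecertificate S ll) {a b : Bool × S}
    (h : (doubling S ll).T a b) : b.2.1.types ⊆ a.2.1.2 :=
  h.elim And.right (hC.types_subset_of_forces a.2.2 b.2.2)

theorem tp_mem_of_T (hC : IsPrecertificate S ll) {a b : Bool × S}
    (h : (doubling S ll).T a b) : (doubling S ll).tp b ∈ a.2.1.2 :=
  types_subset_of_T hC h (Set.mem_insert _ _)

theorem exists_T_of_mem (hC : IsPrecertificate S ll) {a : Bool × S} {π : OneType Sig}
    (hπ : π ∈ a.2.1.2) : ∃ b, (doubling S ll).tp b = π ∧ (doubling S ll).T a b := by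
  obtain ⟨Ps, hPs, hsub⟩ := hC.exists_subset a.2 a.2.2 π hπ
  exact ⟨(true, ⟨(π, Ps), hPs⟩), rfl, Or.inl ⟨rfl, Set.insert_subset hπ hsub⟩⟩

theorem transitive_T (hC : IsPrecertificate S ll) : Transitive (doubling S ll).T := by
  intro a b c hab hbc
  have hba : b.2.1.types ⊆ a.2.1.2 := types_subset_of_T hC hab
  obtain ⟨hc, hcb⟩ | hforced := hbc
  · exact Or.inl ⟨hc, hcb.trans ((Set.subset_insert _ _).trans hba)⟩
  · exact Or.inr (hforced.of_types_subset hba)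

theorem strSat_of_certSat (hC : IsPrecertificate S ll) :
    ∀ ψ : Basic Sig, CertSat S ll ψ → StrSat (doubling S ll) ψ
  | .exQF _, hψ => by
    obtain ⟨_, hπ, hμ⟩ := hψ
    obtain ⟨a, rfl⟩ := (range_tp (ll := ll)).ge hπ
    exact ⟨a, hμ⟩
  | .allQF _, hψ => fun a => hψ _ ⟨_, a.2.2⟩
  | .allExT _ _ true, hψ => by
    rintro a rfl
    obtain ⟨_, hmem, hμ⟩ := hψ _ a.2.2
    obtain ⟨b, rfl, hab⟩ := exists_T_of_mem hC hmem
    exact ⟨b, hμ, hab⟩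
  | .allExT _ _ false, hψ => by
    rintro a rfl
    obtain ⟨π', Ps', hS, hμ, hnot_forced⟩ := hψ _ a.2.2
    exact ⟨(false, ⟨(π', Ps'), hS⟩), hμ, T_false_iff.not.mpr hnot_forced⟩
  | .allAllT _ _ true, hψ => by
    rintro a rfl b rfl
    exact T_of_ll (hψ ⟨_, a.2.2⟩ ⟨_, b.2.2⟩)
  | .allAllT _ _ false, hψ => by
    rintro a rfl b rfl hab
    exact hψ _ a.2.2 (tp_mem_of_T hC hab)

end doubling

end

theorem certificate_to_structure_general {Sig : Type} (S : Set (SuperType Sig))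
    (ll : OneType Sig → OneType Sig → Prop) (hC : IsPrecertificate S ll) :
    ∃ (A : Type) (M : Str Sig A), Transitive M.T ∧
      Cardinal.mk A = 2 * Cardinal.mk S ∧
      ∀ ψ : Basic Sig, CertSat S ll ψ → StrSat M ψ :=
  ⟨Bool × S, doubling S ll, doubling.transitive_T hC, by simp, doubling.strSat_of_certSat hC⟩

/-- Lemma 4.  If `C = (S, ≪)` is a certificate, then there exists a
structure `𝔄` interpreting `Σ ∪ {t}` with `t` transitive, over a domain of cardinality
`2·|S|`, such that every basic FL²1Tᵘ-formula satisfied by `C` is satisfied by `𝔄`. -/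
theorem certificate_to_structure {Sig : Type} (S : Set (SuperType Sig))
    (ll : OneType Sig → OneType Sig → Prop) (hC : IsCertificate S ll) :
    ∃ (A : Type) (M : Str Sig A), Transitive M.T ∧
      Cardinal.mk A = 2 * Cardinal.mk S ∧
      ∀ ψ : Basic Sig, CertSat S ll ψ → StrSat M ψ :=
  certificate_to_structure_general S ll hC.isPrecertificate

end FlutedCertificates
end

section
/- If φ is a satisfiable formula of FL²1T^u, then φ has a model of size at most doubly exponential in the size of φ; consequently, the satisfiability problem for FL²1T^u is in 2-NEXPTIME. -/
/- STATEMENT 4: FL²1Tᵘ has the doubly exponential-sized model property.  (The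
resulting 2-NEXPTIME upper bound for satisfiability is the standard algorithmic
consequence of this bound.)  FL²1Tᵘ is the two-variable fluted fragment
over a unary signature `Fin n` together with one distinguished transitive binary
predicate `t` (and no other binary predicates). -/

namespace FlutedOneTransUnary

/-- Quantifier-free formulas over the unary signature `Fin n`, in a single variable. -/
inductive QF (n : ℕ) : Type
  | atom (p : Fin n) : QF n
  | fls : QF n
  | not (φ : QF n) : QF n
  | and (φ ψ : QF n) : QF n
  | or (φ ψ : QF n) : QF n

def QF.eval {n : ℕ} (v : Fin n → Prop) : QF n → Prop
  | .atom p => v p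
  | .fls => False
  | .not φ => ¬ QF.eval v φ
  | .and φ ψ => QF.eval v φ ∧ QF.eval v ψ
  | .or φ ψ => QF.eval v φ ∨ QF.eval v ψ

def QF.size {n : ℕ} : QF n → ℕ
  | .atom _ => 1
  | .fls => 1
  | .not φ => QF.size φ + 1
  | .and φ ψ => QF.size φ + QF.size ψ + 1
  | .or φ ψ => QF.size φ + QF.size ψ + 1

/-- A 1-type over `Fin n`: a maximal consistent conjunction of unary literals,
identified with a truth-value assignment to the unary predicates. -/
abbrev OneType (n : ℕ) := Fin n → Bool

/-- A structure interpreting the unary predicates `Fin n` and the distinguished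
binary predicate `t`. -/
structure Str (n : ℕ) (A : Type) where
  P : Fin n → A → Prop
  T : A → A → Prop

/-- `a` realizes the 1-type `π`. -/
def Str.hasType {n : ℕ} {A : Type} (M : Str n A) (π : OneType n) (a : A) : Prop :=
  ∀ p, M.P p a ↔ π p = true

/-- Basic FL²1Tᵘ-formulas: `∃x.μ`, `∀x.μ`, `∀x(π → ∃y(μ(y) ∧ ±t(x,y)))` and
`∀x(π → ∀y(π'(y) → ±t(x,y)))`. -/
inductive Basic (n : ℕ) : Type
  | exQF (μ : QF n)
  | allQF (μ : QF n)
  | allExT (π : OneType n) (μ : QF n) (sign : Bool)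
  | allAllT (π π' : OneType n) (sign : Bool)

def Basic.Sat {n : ℕ} {A : Type} (M : Str n A) : Basic n → Prop
  | .exQF μ => ∃ a : A, μ.eval (fun p => M.P p a)
  | .allQF μ => ∀ a : A, μ.eval (fun p => M.P p a)
  | .allExT π μ s => ∀ a : A, M.hasType π a →
      ∃ b : A, μ.eval (fun p => M.P p b) ∧ (if s then M.T a b else ¬ M.T a b)
  | .allAllT π π' s => ∀ a : A, M.hasType π a → ∀ b : A, M.hasType π' b →
      (if s then M.T a b else ¬ M.T a b)

def Basic.size {n : ℕ} : Basic n → ℕ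
  | .exQF μ => μ.size + 1
  | .allQF μ => μ.size + 1
  | .allExT _ μ _ => n + μ.size + 2
  | .allAllT _ _ _ => 2 * n + 2

/-- Fluted two-variable formulas over the unary signature `Fin n` together with the
distinguished binary predicate `t`; the index `m` records that the free variables form
a suffix of `x₁, …, x_m` (atoms must end at the last variable `x_m`). -/
inductive FL (n : ℕ) : ℕ → Type
  | patom (p : Fin n) {m : ℕ} (h1 : 1 ≤ m) (h2 : m ≤ 2) : FL n m
  | tatom : FL n 2
  | fls {m : ℕ} (h : m ≤ 2) : FL n m
  | not {m : ℕ} (φ : FL n m) : FL n m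
  | and {m : ℕ} (φ ψ : FL n m) : FL n m
  | or {m : ℕ} (φ ψ : FL n m) : FL n m
  | ex {m : ℕ} (h : m ≤ 1) (φ : FL n (m + 1)) : FL n m
  | all {m : ℕ} (h : m ≤ 1) (φ : FL n (m + 1)) : FL n m

def FL.Sat {n : ℕ} {A : Type} (M : Str n A) : ∀ {m : ℕ}, FL n m → (Fin m → A) → Prop
  | m, .patom p h1 _, v => M.P p (v ⟨m - 1, by omega⟩)
  | _, .tatom, v => M.T (v 0) (v 1)
  | _, .fls _, _ => False
  | _, .not φ, v => ¬ FL.Sat M φ v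
  | _, .and φ ψ, v => FL.Sat M φ v ∧ FL.Sat M ψ v
  | _, .or φ ψ, v => FL.Sat M φ v ∨ FL.Sat M ψ v
  | _, .ex _ φ, v => ∃ a : A, FL.Sat M φ (Fin.snoc v a)
  | _, .all _ φ, v => ∀ a : A, FL.Sat M φ (Fin.snoc v a)

def FL.size {n : ℕ} : ∀ {m : ℕ}, FL n m → ℕ
  | _, .patom _ _ _ => 1
  | _, .tatom => 1
  | _, .fls _ => 1
  | _, .not φ => FL.size φ + 1
  | _, .and φ ψ => FL.size φ + FL.size ψ + 1
  | _, .or φ ψ => FL.size φ + FL.size ψ + 1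
  | _, .ex _ φ => FL.size φ + 1
  | _, .all _ φ => FL.size φ + 1

/-- Renaming of unary predicates along a signature inclusion. -/
def FL.lift {n n' : ℕ} (f : Fin n → Fin n') : ∀ {m : ℕ}, FL n m → FL n' m
  | _, .patom p h1 h2 => .patom (f p) h1 h2
  | _, .tatom => .tatom
  | _, .fls h => .fls h
  | _, .not φ => .not (FL.lift f φ)
  | _, .and φ ψ => .and (FL.lift f φ) (FL.lift f ψ)
  | _, .or φ ψ => .or (FL.lift f φ) (FL.lift f ψ)
  | _, .ex h φ => .ex h (FL.lift f φ)
  | _, .all h φ => .all h (FL.lift f φ)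

/-- Satisfaction of an FL²1Tᵘ-sentence. -/
def SatSent {n : ℕ} {A : Type} (M : Str n A) (φ : FL n 0) : Prop :=
  FL.Sat M φ (fun i => i.elim0)

/-!
A fluted two-variable formula looks from an element only forwards along `t`, so its truth value is
determined by which 1-types occur, with which sign of `t`, on the elements seen from each point.
Record for each element of a transitive model its *profile*: its own 1-type and the 1-types of its
`t`-successors, its non-successors and its `t`-predecessors. Two copies of the set of realized
profiles form the small model. Inside a copy we draw every edge compatible with transitivity, which
realizes all positive requirements; across copies we draw only the edges which transitivity forces,
so that every negative requirement is met in the opposite copy. There are at most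
`2 ^ n * (2 ^ 2 ^ n) ^ 3` profiles.
-/

section Invariance

open Classical in
/-- The 1-type realized by an element of a structure. -/
noncomputable def Str.oneType {n : ℕ} {A : Type} (M : Str n A) (a : A) : OneType n :=
  fun p => decide (M.P p a)

variable {n : ℕ} {A B : Type} {M : Str n A} {N : Str n B}

theorem Str.P_iff_of_oneType_eq {a : A} {b : B} (h : M.oneType a = N.oneType b) (p : Fin n) :
    M.P p a ↔ N.P p b :=
  decide_eq_decide.1 (congrFun h p)

/-- Agreement of two pointed structures as far as fluted two-variable formulas can see: the points
have the same 1-type, and the same 1-types are reached from them by `t` and by its negation. -/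
def OutEquiv (M : Str n A) (N : Str n B) (a : A) (b : B) : Prop :=
  M.oneType a = N.oneType b ∧
    Relator.BiTotal fun a' b' => M.oneType a' = N.oneType b' ∧ (M.T a a' ↔ N.T b b')

theorem FL.sat_two_congr : ∀ (φ : FL n 2) {v : Fin 2 → A} {w : Fin 2 → B},
    M.oneType (v 1) = N.oneType (w 1) → (M.T (v 0) (v 1) ↔ N.T (w 0) (w 1)) →
    (φ.Sat M v ↔ φ.Sat N w)
  | .patom p _ _, _, _, htype, _ => Str.P_iff_of_oneType_eq htype p
  | .tatom, _, _, _, hT => hT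
  | .fls _, _, _, _, _ => Iff.rfl
  | .not φ, _, _, htype, hT => not_congr (φ.sat_two_congr htype hT)
  | .and φ ψ, _, _, htype, hT =>
      and_congr (φ.sat_two_congr htype hT) (ψ.sat_two_congr htype hT)
  | .or φ ψ, _, _, htype, hT =>
      or_congr (φ.sat_two_congr htype hT) (ψ.sat_two_congr htype hT)
  | .ex h _, _, _, _, _ => absurd h (by decide)
  | .all h _, _, _, _, _ => absurd h (by decide)

theorem FL.sat_one_congr : ∀ (φ : FL n 1) {v : Fin 1 → A} {w : Fin 1 → B},
    OutEquiv M N (v 0) (w 0) → (φ.Sat M v ↔ φ.Sat N w)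
  | .patom p _ _, _, _, h => Str.P_iff_of_oneType_eq h.1 p
  | .fls _, _, _, _ => Iff.rfl
  | .not φ, _, _, h => not_congr (φ.sat_one_congr h)
  | .and φ ψ, _, _, h => and_congr (φ.sat_one_congr h) (ψ.sat_one_congr h)
  | .or φ ψ, _, _, h => or_congr (φ.sat_one_congr h) (ψ.sat_one_congr h)
  | .ex _ φ, _, _, h => h.2.rel_exists fun _ _ hab => φ.sat_two_congr hab.1 hab.2
  | .all _ φ, _, _, h => h.2.rel_forall fun _ _ hab => φ.sat_two_congr hab.1 hab.2

theorem FL.sat_zero_congr (h : Relator.BiTotal (OutEquiv M N)) :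
    ∀ (φ : FL n 0) {v : Fin 0 → A} {w : Fin 0 → B}, φ.Sat M v ↔ φ.Sat N w
  | .patom _ h1 _, _, _ => absurd h1 (by decide)
  | .fls _, _, _ => Iff.rfl
  | .not φ, _, _ => not_congr (φ.sat_zero_congr h)
  | .and φ ψ, _, _ => and_congr (φ.sat_zero_congr h) (ψ.sat_zero_congr h)
  | .or φ ψ, _, _ => or_congr (φ.sat_zero_congr h) (ψ.sat_zero_congr h)
  | .ex _ φ, _, _ => h.rel_exists fun _ _ hab => φ.sat_one_congr hab
  | .all _ φ, _, _ => h.rel_forall fun _ _ hab => φ.sat_one_congr hab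

end Invariance

/-- What an element of a labelled directed graph knows about its surroundings: its own label, and
the labels occurring among its successors, its non-successors and its predecessors. -/
structure Profile (L : Type*) where
  label : L
  succ : Set L
  nonSucc : Set L
  pred : Set L

namespace Profile

section Edge

variable {L : Type*} {c d e : Profile L}

/-- The conditions which transitivity puts on the profiles of the ends `c → d` of an edge. -/
structure Compatible (c d : Profile L) : Prop where
  label_mem_succ : d.label ∈ c.succ
  label_mem_pred : c.label ∈ d.pred
  succ_subset : d.succ ⊆ c.succ
  nonSucc_subset : c.nonSucc ⊆ d.nonSucc
  pred_subset : c.pred ⊆ d.pred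

theorem Compatible.trans (hcd : c.Compatible d) (hde : d.Compatible e) : c.Compatible e where
  label_mem_succ := hcd.succ_subset hde.label_mem_succ
  label_mem_pred := hde.pred_subset hcd.label_mem_pred
  succ_subset := hde.succ_subset.trans hcd.succ_subset
  nonSucc_subset := hcd.nonSucc_subset.trans hde.nonSucc_subset
  pred_subset := hcd.pred_subset.trans hde.pred_subset

/-- In a transitive graph, every element with profile `c` has an edge to every element with
profile `d`, because the label of the latter or of one of its predecessors never occurs on a
non-successor of the former. -/
def Forces (c d : Profile L) : Prop :=
  ∃ l ∈ insert d.label d.pred, l ∉ c.nonSucc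

theorem Forces.trans_compatible (hcd : c.Forces d) (hde : d.Compatible e) : c.Forces e := by
  obtain ⟨l, hl, hlc⟩ := hcd
  have hl_pred : l ∈ e.pred :=
    Set.insert_subset hde.label_mem_pred hde.pred_subset hl
  exact ⟨l, Set.mem_insert_of_mem _ hl_pred, hlc⟩

theorem Compatible.trans_forces (hcd : c.Compatible d) (hde : d.Forces e) : c.Forces e := by
  obtain ⟨l, hl, hld⟩ := hde
  exact ⟨l, hl, fun hlc => hld (hcd.nonSucc_subset hlc)⟩

/-- The edge relation on two copies of the set of profiles: every compatible edge inside a copy,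
only the forced ones between the copies. -/
def Edge (x y : Profile L × Bool) : Prop :=
  x.1.Compatible y.1 ∧ (x.2 = y.2 ∨ x.1.Forces y.1)

instance : IsTrans (Profile L × Bool) Edge where
  trans := by
    rintro x y z ⟨hxy, hxy'⟩ ⟨hyz, hyz'⟩
    refine ⟨hxy.trans hyz, ?_⟩
    rcases hxy' with hcopy | hforces
    · exact hyz'.imp hcopy.trans hxy.trans_forces
    · exact Or.inr (hforces.trans_compatible hyz)

end Edge

section OfRelation

variable {α L : Type*} {r : α → α → Prop} {ℓ : α → L} {a b : α}

/-- The profile of an element of the directed graph `r` labelled by `ℓ`. -/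
def ofRel (r : α → α → Prop) (ℓ : α → L) (a : α) : Profile L where
  label := ℓ a
  succ := ℓ '' {b | r a b}
  nonSucc := ℓ '' {b | ¬ r a b}
  pred := ℓ '' {b | r b a}

theorem compatible_of_rel [IsTrans α r] (hab : r a b) :
    (ofRel r ℓ a).Compatible (ofRel r ℓ b) where
  label_mem_succ := Set.mem_image_of_mem ℓ hab
  label_mem_pred := Set.mem_image_of_mem ℓ hab
  succ_subset := Set.image_mono fun _ hbc => trans_of r hab hbc
  nonSucc_subset := Set.image_mono fun _ hac hbc => hac (trans_of r hab hbc)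
  pred_subset := Set.image_mono fun _ hca => trans_of r hca hab

theorem rel_of_label_notMem_nonSucc (h : ℓ b ∉ (ofRel r ℓ a).nonSucc) : r a b :=
  of_not_not fun hab => h (Set.mem_image_of_mem ℓ hab)

theorem rel_of_forces [IsTrans α r] (h : (ofRel r ℓ a).Forces (ofRel r ℓ b)) : r a b := by
  obtain ⟨l, rfl | ⟨c, hcb, rfl⟩, hl⟩ := h
  · exact rel_of_label_notMem_nonSucc hl
  · exact trans_of r (rel_of_label_notMem_nonSucc hl) hcb

theorem edge_or_label_mem_nonSucc [IsTrans α r] (a b : α) (i j : Bool) :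
    Edge (ofRel r ℓ a, i) (ofRel r ℓ b, j) ∨ ℓ b ∈ (ofRel r ℓ a).nonSucc := by
  refine or_iff_not_imp_right.2 fun hb => ?_
  exact ⟨compatible_of_rel (rel_of_label_notMem_nonSucc hb),
    Or.inr ⟨ℓ b, Set.mem_insert _ _, hb⟩⟩

theorem exists_edge_iff_rel [IsTrans α r] (a b : α) (i : Bool) :
    ∃ j, Edge (ofRel r ℓ a, i) (ofRel r ℓ b, j) ↔ r a b := by
  by_cases hab : r a b
  · exact ⟨i, iff_of_true ⟨compatible_of_rel hab, Or.inl rfl⟩ hab⟩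
  · refine ⟨!i, iff_of_false (fun hedge => hab ?_) hab⟩
    exact rel_of_forces (hedge.2.resolve_left (Bool.not_ne_self i).symm)

theorem exists_rel_iff_edge [IsTrans α r] (a b : α) (i j : Bool) :
    ∃ b', ℓ b' = ℓ b ∧ (r a b' ↔ Edge (ofRel r ℓ a, i) (ofRel r ℓ b, j)) := by
  by_cases hedge : Edge (ofRel r ℓ a, i) (ofRel r ℓ b, j)
  · obtain ⟨b', hab', hlabel⟩ := hedge.1.label_mem_succ
    exact ⟨b', hlabel, iff_of_true hab' hedge⟩
  · obtain ⟨b', hab', hlabel⟩ := (edge_or_label_mem_nonSucc a b i j).resolve_left hedge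
    exact ⟨b', hlabel, iff_of_false hab' hedge⟩

end OfRelation

section Card

variable (L : Type*)

/-- Profiles as tuples, used to count them. -/
def equivProd : Profile L ≃ L × Set L × Set L × Set L where
  toFun c := (c.label, c.succ, c.nonSucc, c.pred)
  invFun x := ⟨x.1, x.2.1, x.2.2.1, x.2.2.2⟩

instance [Finite L] : Finite (Profile L) :=
  Finite.of_equiv _ (equivProd L).symm

theorem card_eq [Finite L] : Nat.card (Profile L) = Nat.card L * 2 ^ (3 * Nat.card L) := by
  have := Fintype.ofFinite L
  have hset : Nat.card (Set L) = 2 ^ Nat.card L := by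
    simp only [Nat.card_eq_fintype_card, Fintype.card_set]
  rw [Nat.card_congr (equivProd L), Nat.card_prod, Nat.card_prod, Nat.card_prod, hset]
  ring

end Card

end Profile

section ProfileModel

variable {n : ℕ} {A : Type} (M : Str n A)

/-- The domain of the small model: two copies of the set of profiles realized in `M`. -/
abbrev ProfileDomain : Type :=
  Set.range (Prod.map (Profile.ofRel M.T M.oneType) (id : Bool → Bool))

/-- The small model: an element satisfies the predicates in the label of its profile. -/
def profileModel : Str n (ProfileDomain M) where
  P p x := x.1.1.label p = true
  T x y := Profile.Edge x.1 y.1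

instance : IsTrans (ProfileDomain M) (profileModel M).T where
  trans _ _ _ hxy hyz := trans_of Profile.Edge hxy hyz

variable {M}

/-- The element of the copy `i` of the small model which represents `a`. -/
noncomputable def profileCopy (a : A) (i : Bool) : ProfileDomain M :=
  ⟨(Profile.ofRel M.T M.oneType a, i), (a, i), rfl⟩

theorem profileModel_oneType_profileCopy (a : A) (i : Bool) :
    (profileModel M).oneType (profileCopy a i) = M.oneType a :=
  funext fun _ => Bool.decide_eq_true

theorem exists_profileCopy_eq (x : ProfileDomain M) : ∃ a i, profileCopy a i = x := by
  obtain ⟨_, ⟨a, i⟩, rfl⟩ := x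
  exact ⟨a, i, rfl⟩

theorem outEquiv_profileCopy [IsTrans A M.T] (a : A) (i : Bool) :
    OutEquiv M (profileModel M) a (profileCopy a i) := by
  refine ⟨(profileModel_oneType_profileCopy a i).symm, fun b => ?_, fun y => ?_⟩
  · obtain ⟨j, hj⟩ := Profile.exists_edge_iff_rel (r := M.T) (ℓ := M.oneType) a b i
    exact ⟨profileCopy b j, (profileModel_oneType_profileCopy b j).symm, hj.symm⟩
  · obtain ⟨b, j, rfl⟩ := exists_profileCopy_eq y
    obtain ⟨b', hlabel, hb'⟩ :=
      Profile.exists_rel_iff_edge (r := M.T) (ℓ := M.oneType) a b i j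
    exact ⟨b', hlabel.trans (profileModel_oneType_profileCopy b j).symm, hb'⟩

theorem biTotal_outEquiv_profileModel [IsTrans A M.T] :
    Relator.BiTotal (OutEquiv M (profileModel M)) := by
  refine ⟨fun a => ⟨profileCopy a true, outEquiv_profileCopy a true⟩, fun x => ?_⟩
  obtain ⟨a, i, rfl⟩ := exists_profileCopy_eq x
  exact ⟨a, outEquiv_profileCopy a i⟩

theorem card_profileDomain_le (M : Str n A) : Nat.card (ProfileDomain M) ≤ 2 ^ 2 ^ (n + 2) := by
  have hn : n + 1 ≤ 2 ^ n := Nat.lt_two_pow_self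
  have hcard : Nat.card (OneType n) = 2 ^ n := by
    rw [Nat.card_fun, Nat.card_fin, Nat.card_eq_fintype_card, Fintype.card_bool]
  calc Nat.card (ProfileDomain M)
      ≤ Nat.card (Profile (OneType n) × Bool) := Finite.card_subtype_le _
    _ = 2 ^ (n + 3 * 2 ^ n + 1) := by
      rw [Nat.card_prod, Profile.card_eq, hcard, Nat.card_eq_fintype_card, Fintype.card_bool]
      ring
    _ ≤ 2 ^ 2 ^ (n + 2) := by
      gcongr
      · norm_num
      · rw [pow_add]
        omega

end ProfileModel

theorem flutedOneTransUnary_doubly_exponential_model_property_general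
    {n : ℕ} {A : Type} [Nonempty A] (M : Str n A) [IsTrans A M.T] :
    ∃ (B : Type) (_ : Nonempty B) (_ : Fintype B) (N : Str n B),
      IsTrans B N.T ∧ (∀ φ : FL n 0, SatSent M φ ↔ SatSent N φ) ∧
      Fintype.card B ≤ 2 ^ 2 ^ (n + 2) := by
  have hfin : Fintype (ProfileDomain M) := Fintype.ofFinite _
  refine ⟨ProfileDomain M, inferInstance, hfin, profileModel M, inferInstance,
    fun φ => φ.sat_zero_congr biTotal_outEquiv_profileModel, ?_⟩
  exact Nat.card_eq_fintype_card.symm.trans_le (card_profileDomain_le M)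

/-- Lemma 5.  If an FL²1Tᵘ-formula `φ` is satisfiable (in a structure
interpreting `t` as a transitive relation), then `φ` has a model of size at most doubly
exponential in the size of `φ` (the size of a formula over the signature `Fin n` being
measured by `n + FL.size φ`).  Hence the satisfiability problem for FL²1Tᵘ is in
2-NEXPTIME. -/
theorem flutedOneTransUnary_doubly_exponential_model_property :
    ∃ c : ℕ, ∀ (n : ℕ) (φ : FL n 0),
      (∃ (A : Type) (_ : Nonempty A) (M : Str n A), Transitive M.T ∧ SatSent M φ) →
      ∃ (A : Type) (_ : Nonempty A) (_ : Fintype A) (M : Str n A),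
        Transitive M.T ∧ SatSent M φ ∧
        Fintype.card A ≤ 2 ^ 2 ^ (c * (n + FL.size φ + 1)) := by
  refine ⟨2, fun n φ ⟨A, _, M, hM, hφ⟩ => ?_⟩
  have : IsTrans A M.T := ⟨fun _ _ _ hab hbc => hM hab hbc⟩
  obtain ⟨B, hne, hfin, N, hN, hequiv, hcard⟩ :=
    flutedOneTransUnary_doubly_exponential_model_property_general M
  refine ⟨B, hne, hfin, N, fun _ _ _ => trans_of N.T, (hequiv φ).1 hφ, hcard.trans ?_⟩
  gcongr <;> omega

end FlutedOneTransUnary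
end

section
/- Let 𝔄 be any structure over a purely relational signature and z > 0. There exists a structure 𝔅 over the same signature such that: (i) for every first-order formula φ without equality, 𝔄 ⊨ φ iff 𝔅 ⊨ φ; (ii) |B| = z·|A|; and (iii) whenever ψ(x₁,…,x_{m−1}) = ∃x_m.χ(x₁,…,x_m) is a first-order formula without equality and 𝔅 ⊨ ψ[b₁,…,b_{m−1}], there exist at least z distinct elements b of B such that 𝔅 ⊨ χ[b₁,…,b_{m−1},b]. -/
/- STATEMENT 6: The duplication lemma for first-order logic without equality over a
purely relational signature. -/

namespace Duplication

open FirstOrder FirstOrder.Language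

/-- A bounded first-order formula contains no equality atoms. -/
inductive NoEq {L : FirstOrder.Language} {α : Type*} :
    ∀ {k : ℕ}, L.BoundedFormula α k → Prop
  | falsum {k : ℕ} : NoEq (BoundedFormula.falsum : L.BoundedFormula α k)
  | rel {k l : ℕ} (R : L.Relations l) (ts : Fin l → L.Term (α ⊕ Fin k)) :
      NoEq (BoundedFormula.rel R ts)
  | imp {k : ℕ} {f g : L.BoundedFormula α k} : NoEq f → NoEq g → NoEq (f.imp g)
  | all {k : ℕ} {f : L.BoundedFormula α (k + 1)} : NoEq f → NoEq f.all

/-! Replace every element of `𝔄` by `z` copies and let relations ignore which copy is used. The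
projection back to `𝔄` is a surjective homomorphism that reflects relations, and such maps preserve
and reflect every formula without equality. In particular all copies of a witness of `∃ x, χ` are
witnesses too. -/

universe u w

open Cardinal Function

/-- Reductions (strict surjective homomorphisms) are the maps along which formulas without equality
are invariant. Unlike an `L.Embedding`, a reduction may identify elements. -/
structure IsReduction {L : FirstOrder.Language} {M N : Type*} [L.Structure M] [L.Structure N]
    (g : M →[L] N) : Prop where
  surjective : Surjective g
  relMap_comp_iff {l : ℕ} (R : L.Relations l) (x : Fin l → M) :
    Structure.RelMap R (g ∘ x) ↔ Structure.RelMap R x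

namespace IsReduction

variable {L : FirstOrder.Language} {M N : Type*} [L.Structure M] [L.Structure N] {g : M →[L] N}

theorem realize_comp_iff (hg : IsReduction g) {α : Type*} {k : ℕ} {φ : L.BoundedFormula α k}
    (hφ : NoEq φ) (v : α → M) (xs : Fin k → M) :
    φ.Realize (g ∘ v) (g ∘ xs) ↔ φ.Realize v xs := by
  induction hφ with
  | falsum => exact Iff.rfl
  | rel R ts =>
    simp only [BoundedFormula.Realize, ← Sum.comp_elim, HomClass.realize_term]
    exact hg.relMap_comp_iff R _
  | imp _ _ ihf ihg => exact imp_congr (ihf xs) (ihg xs)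
  | all _ ih => simp only [BoundedFormula.realize_all, hg.surjective.forall, ← Fin.comp_snoc, ih]

theorem realize_sentence_iff (hg : IsReduction g) {φ : L.Sentence} (hφ : NoEq φ) :
    N ⊨ φ ↔ M ⊨ φ := by
  simpa only [Sentence.Realize, Formula.Realize, Subsingleton.elim (g ∘ _) default] using
    hg.realize_comp_iff hφ default default

theorem realize_snoc_iff_of_map_eq (hg : IsReduction g) {α : Type*} {m : ℕ}
    {χ : L.BoundedFormula α (m + 1)} (hχ : NoEq χ) (v : α → M) (xs : Fin m → M) {b c : M}
    (hbc : g b = g c) :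
    χ.Realize v (Fin.snoc xs b) ↔ χ.Realize v (Fin.snoc xs c) := by
  simp only [← hg.realize_comp_iff hχ, Fin.comp_snoc, hbc]

end IsReduction

/-- The blow-up of a structure on `A`, in which every element is replaced by a family of
indiscernible copies indexed by `I`. It is a synonym of `I × A` that carries its own structure. -/
def Blowup (I A : Type*) : Type _ := I × A

namespace Blowup

variable {L : FirstOrder.Language} {I A : Type*} [Nonempty I] [L.Structure A]

/-- Relations ignore the `I`-component. The copy in which a function symbol takes its value is
irrelevant to formulas without equality, so an arbitrary one is chosen. -/
noncomputable instance : L.Structure (Blowup I A) where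
  funMap f x := (Classical.arbitrary I, Structure.funMap f (Prod.snd ∘ x))
  RelMap R x := Structure.RelMap R (Prod.snd ∘ x)

variable (L I A) in
/-- The projection that identifies all copies of an element. -/
def proj : Blowup I A →[L] A where
  toFun := Prod.snd

variable (L I A) in
theorem isReduction_proj : IsReduction (proj L I A) where
  surjective := Prod.snd_surjective
  relMap_comp_iff _ _ := Iff.rfl

variable (L I) in
/-- The copies of `a` in the blow-up are indexed by `I`. -/
def fiberEquiv (a : A) : {b // proj L I A b = a} ≃ I where
  toFun b := b.1.1
  invFun i := ⟨(i, a), rfl⟩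
  left_inv := by rintro ⟨_, rfl⟩; rfl
  right_inv _ := rfl

end Blowup

theorem exists_finset_le_card_of_natCast_le_mk {α : Type*} {s : Set α} {n : ℕ} (h : n ≤ #s) :
    ∃ t : Finset α, n ≤ t.card ∧ ∀ a ∈ t, a ∈ s :=
  have ⟨t, ht⟩ := exists_finset_le_card s n h
  ⟨t.map (Embedding.subtype _), by rwa [t.card_map], fun _ ↦ t.property_of_mem_map_subtype⟩

theorem duplication_general (L : FirstOrder.Language) (A : Type u) [L.Structure A]
    (κ : Cardinal.{u}) (hκ : κ ≠ 0) :
    ∃ (B : Type u) (_ : L.Structure B),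
      (∀ φ : L.Sentence, NoEq φ → (A ⊨ φ ↔ B ⊨ φ)) ∧
      #B = κ * #A ∧
      ∀ {α : Type w} {m : ℕ} {χ : L.BoundedFormula α (m + 1)}, NoEq χ →
        ∀ (v : α → B) (bs : Fin m → B), χ.ex.Realize v bs →
          κ ≤ #{b | χ.Realize v (Fin.snoc bs b)} := by
  induction κ using Cardinal.inductionOn with | _ I
  have : Nonempty I := mk_ne_zero_iff.1 hκ
  have hproj := Blowup.isReduction_proj L I A
  refine ⟨Blowup I A, inferInstance, fun φ hφ ↦ hproj.realize_sentence_iff hφ,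
    (mul_def I A).symm, fun {_ _ χ} hχ v bs hex ↦ ?_⟩
  obtain ⟨b, hb⟩ := BoundedFormula.realize_ex.1 hex
  calc #I = #{c // Blowup.proj L I A c = Blowup.proj L I A b} :=
        (mk_congr (Blowup.fiberEquiv L I _)).symm
    _ ≤ #{c | χ.Realize v (Fin.snoc bs c)} := mk_le_mk_of_subset fun _ hc ↦
      (hproj.realize_snoc_iff_of_map_eq hχ v bs hc).2 hb

/-- Lemma 8.  Let `𝔄` be any structure over a purely relational
signature and `z > 0`.  There exists a structure `𝔅` over the same signature such that:
(i) `𝔄` and `𝔅` satisfy the same first-order sentences without equality;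
(ii) `|B| = z·|A|`; and (iii) whenever `ψ = ∃x_m.χ` is a first-order formula without
equality (with free variables `x₁, …, x_{m-1}`) and `𝔅 ⊨ ψ[b₁,…,b_{m-1}]`, there are at
least `z` distinct elements `b` of `B` with `𝔅 ⊨ χ[b₁,…,b_{m-1},b]`. -/
theorem duplication (L : FirstOrder.Language) [L.IsRelational]
    (A : Type*) [L.Structure A] (z : ℕ) (hz : 0 < z) :
    ∃ (B : Type _) (SB : L.Structure B),
      (∀ φ : L.Sentence, NoEq φ →
        (A ⊨ φ ↔ @FirstOrder.Language.Sentence.Realize L B SB φ)) ∧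
      Cardinal.mk B = z * Cardinal.mk A ∧
      (∀ (m : ℕ) (χ : L.BoundedFormula Empty (m + 1)), NoEq χ →
        ∀ bs : Fin m → B,
          @FirstOrder.Language.BoundedFormula.Realize L B SB Empty m
            (BoundedFormula.ex χ) (fun x => x.elim) bs →
          ∃ s : Finset B, z ≤ s.card ∧ ∀ b ∈ s,
            @FirstOrder.Language.BoundedFormula.Realize L B SB Empty (m + 1)
              χ (fun x => x.elim) (Fin.snoc bs b)) := by
  obtain ⟨B, SB, hsentence, hcard, hex⟩ := duplication_general L A z (Nat.cast_ne_zero.2 hz.ne')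
  exact ⟨B, SB, hsentence, hcard, fun _ _ hχ bs h ↦
    exists_finset_le_card_of_natCast_le_mk (hex hχ _ bs h)⟩

end Duplication
end

section
/- Let Γ be a set of fluted m-clauses over a signature Σ ∪ {t}, let Σ' be the result of removing all predicates of maximal arity m from Σ, and let τ⁻ be a fluted m-type over Σ' ∪ {t}. If τ⁻ is consistent with Γ° (the set of clauses in the fluted-resolution closure Γ* of Γ that contain no non-distinguished predicate of arity m), then there exists a fluted m-type τ over Σ ∪ {t} such that τ ⊇ τ⁻ and τ is consistent with Γ. -/
/- STATEMENT 7: Completeness of fluted (ordered) resolution (Lemma 9). -/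

namespace FlutedResolution

attribute [local instance] Classical.propDecidable

/-- A fluted `m`-atom over the signature `Σ ∪ {t}`, where `Σ` consists of the
predicates `Fin n` with (positive) arities `ar`: either `p(x_{m-k+1},…,x_m)` for
`p ∈ Σ` of arity `k ≤ m`, or `t(x_{m-1},x_m)`. -/
inductive FAtom (n : ℕ) (ar : Fin n → ℕ) (m : ℕ) : Type
  | pred (i : Fin n) (h1 : 1 ≤ ar i) (h2 : ar i ≤ m) : FAtom n ar m
  | tat (h : 2 ≤ m) : FAtom n ar m

/-- An atom over `Σ' ∪ {t}`, where `Σ'` is the result of removing from `Σ` all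
predicates of maximal arity `m`. -/
def FAtom.Small {n : ℕ} {ar : Fin n → ℕ} {m : ℕ} : FAtom n ar m → Prop
  | .pred i _ _ => ar i < m
  | .tat _ => True

/-- A fluted `m`-literal: a signed fluted `m`-atom. -/
abbrev Lit (n : ℕ) (ar : Fin n → ℕ) (m : ℕ) := Bool × FAtom n ar m

/-- A fluted `m`-clause: a disjunction of fluted `m`-literals (`⊥` is the empty
clause). -/
abbrev Clause (n : ℕ) (ar : Fin n → ℕ) (m : ℕ) := Finset (Lit n ar m)

/-- The fluted-resolution closure `Γ*` of a set `Γ` of fluted `m`-clauses: resolution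
is allowed only on atoms `p(x₁,…,x_m)` where `p` is a non-distinguished predicate of
maximal arity `m`. -/
inductive InClosure {n : ℕ} {ar : Fin n → ℕ} {m : ℕ} (Γ : Set (Clause n ar m)) :
    Clause n ar m → Prop
  | base {c : Clause n ar m} (h : c ∈ Γ) : InClosure Γ c
  | res {γ δ : Clause n ar m} {i : Fin n} {h1 : 1 ≤ ar i} (hmax : ar i = m)
      (hγ : InClosure Γ γ) (hδ : InClosure Γ δ)
      (hpos : (true, FAtom.pred i h1 hmax.le) ∈ γ)
      (hneg : (false, FAtom.pred i h1 hmax.le) ∈ δ) :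
      InClosure Γ
        (γ.erase (true, FAtom.pred i h1 hmax.le) ∪
          δ.erase (false, FAtom.pred i h1 hmax.le))

/-! This is Davis–Putnam elimination. If a set of clauses is closed under resolution on an atom `a`
and `v` satisfies those of its clauses that do not mention `a`, then one of the two values of `a`
makes `v` satisfy all of them: otherwise some clause `γ` fails for `a` false and some clause `δ`
fails for `a` true, and their resolvent on `a`, which no longer mentions `a`, fails under `v`.
There are finitely many atoms `p(x₁,…,x_m)` with `p ∈ Σ` of arity `m`, so they can be given values
one at a time.
-/

section Propositional

variable {α : Type*}

/-- The valuation `v` makes some literal of the clause `c` true; a literal is an atom together with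
its sign. -/
def Satisfies (v : α → Bool) (c : Finset (Bool × α)) : Prop :=
  ∃ l ∈ c, v l.2 = l.1

/-- No atom of the clause `c` belongs to `R`. -/
def Avoids (R : Set α) (c : Finset (Bool × α)) : Prop :=
  ∀ l ∈ c, l.2 ∉ R

/-- The resolvent on the atom `a` of `γ`, which is meant to contain `a`, and `δ`, which is meant to
contain `¬a`. It still mentions `a` if `γ` also contains `¬a` or `δ` also contains `a`. -/
noncomputable def resolvent (γ δ : Finset (Bool × α)) (a : α) : Finset (Bool × α) :=
  γ.erase (true, a) ∪ δ.erase (false, a)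

/-- The set `C` of clauses contains all resolvents of its members on atoms of `R`. -/
def ClosedUnderResolution (R : Set α) (C : Set (Finset (Bool × α))) : Prop :=
  ∀ a ∈ R, ∀ γ ∈ C, ∀ δ ∈ C, (true, a) ∈ γ → (false, a) ∈ δ → resolvent γ δ a ∈ C

variable {v : α → Bool} {a : α} {R S : Set α} {c d γ δ : Finset (Bool × α)}
  {C : Set (Finset (Bool × α))}

theorem satisfies_union : Satisfies v (c ∪ d) ↔ Satisfies v c ∨ Satisfies v d := by
  simp only [Satisfies, Finset.mem_union, or_and_right, exists_or]

theorem avoids_union : Avoids R (c ∪ d) ↔ Avoids R c ∧ Avoids R d := by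
  simp only [Avoids, Finset.mem_union, or_imp, forall_and]

theorem avoids_insert : Avoids (insert a R) c ↔ Avoids {a} c ∧ Avoids R c := by
  simp only [Avoids, Set.mem_insert_iff, Set.mem_singleton_iff, not_or, forall_and]

theorem Avoids.mono (hcd : c ⊆ d) (hd : Avoids R d) : Avoids R c :=
  fun l hl => hd l (hcd hl)

theorem Avoids.resolvent (hγ : Avoids R γ) (hδ : Avoids R δ) : Avoids R (resolvent γ δ a) :=
  avoids_union.2 ⟨hγ.mono (Finset.erase_subset _ _), hδ.mono (Finset.erase_subset _ _)⟩

theorem ClosedUnderResolution.mono (hRS : R ⊆ S) (hC : ClosedUnderResolution S C) :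
    ClosedUnderResolution R C :=
  fun a ha => hC a (hRS ha)

theorem ClosedUnderResolution.sep_avoids (hC : ClosedUnderResolution R C) :
    ClosedUnderResolution R {c ∈ C | Avoids S c} :=
  fun a ha γ hγ δ hδ hpos hneg =>
    ⟨hC a ha γ hγ.1 δ hδ.1 hpos hneg, hγ.2.resolvent hδ.2⟩

theorem avoids_erase_of_not_satisfies_update {b : Bool}
    (hc : ¬ Satisfies (Function.update v a b) c) : Avoids {a} (c.erase (!b, a)) := by
  rintro ⟨s, x⟩ hl rfl
  obtain ⟨hne, hmem⟩ := Finset.mem_erase.1 hl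
  have hs : s = b := by simpa using hne
  exact hc ⟨(s, x), hmem, by simp [hs]⟩

theorem not_satisfies_erase_of_not_satisfies_update {b : Bool}
    (hc : ¬ Satisfies (Function.update v a b) c) : ¬ Satisfies v (c.erase (!b, a)) := by
  rintro ⟨l, hl, hvl⟩
  have hla : l.2 ≠ a := avoids_erase_of_not_satisfies_update hc l hl
  exact hc ⟨l, Finset.mem_of_mem_erase hl, by rwa [Function.update_of_ne hla]⟩

theorem exists_update_satisfies (hC : ClosedUnderResolution {a} C)
    (hv : ∀ c ∈ C, Avoids {a} c → Satisfies v c) :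
    ∃ b, ∀ c ∈ C, Satisfies (Function.update v a b) c := by
  by_contra! hfail
  have mem_of_fail {b c} (hcC : c ∈ C) (hc : ¬ Satisfies (Function.update v a b) c) :
      (!b, a) ∈ c := by
    by_contra hmem
    have havoid := avoids_erase_of_not_satisfies_update hc
    have hunsat := not_satisfies_erase_of_not_satisfies_update hc
    rw [Finset.erase_eq_of_notMem hmem] at havoid hunsat
    exact hunsat (hv c hcC havoid)
  obtain ⟨γ, hγC, hγ⟩ := hfail false
  obtain ⟨δ, hδC, hδ⟩ := hfail true
  have hresC : resolvent γ δ a ∈ C :=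
    hC a rfl γ hγC δ hδC (mem_of_fail hγC hγ) (mem_of_fail hδC hδ)
  have hres : Satisfies v (resolvent γ δ a) := hv _ hresC <| avoids_union.2
    ⟨avoids_erase_of_not_satisfies_update hγ, avoids_erase_of_not_satisfies_update hδ⟩
  exact (satisfies_union.1 hres).elim
    (not_satisfies_erase_of_not_satisfies_update hγ)
    (not_satisfies_erase_of_not_satisfies_update hδ)

theorem exists_eqOn_compl_satisfies (hR : R.Finite) (hC : ClosedUnderResolution R C)
    (hv : ∀ c ∈ C, Avoids R c → Satisfies v c) :
    ∃ w : α → Bool, Set.EqOn w v Rᶜ ∧ ∀ c ∈ C, Satisfies w c := by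
  induction R, hR using Set.Finite.induction_on generalizing C with
  | empty => exact ⟨v, Set.eqOn_refl _ _, fun c hc => hv c hc fun _ _ => Set.notMem_empty _⟩
  | @insert a R _ _ ih =>
    obtain ⟨w, hwv, hw⟩ := ih (C := {c ∈ C | Avoids {a} c})
      (hC.mono (Set.subset_insert a R)).sep_avoids
      fun c hc hcR => hv c hc.1 (avoids_insert.2 ⟨hc.2, hcR⟩)
    obtain ⟨b, hb⟩ := exists_update_satisfies
      (hC.mono (Set.singleton_subset_iff.2 (Set.mem_insert a R))) fun c hc hca => hw c ⟨hc, hca⟩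
    refine ⟨Function.update w a b, fun x hx => ?_, hb⟩
    obtain ⟨hxa, hxR⟩ := not_or.1 hx
    rw [Function.update_of_ne hxa, hwv hxR]

end Propositional

section Fluted

variable {n m : ℕ} {ar : Fin n → ℕ}

instance FAtom.finite : Finite (FAtom n ar m) := by
  let predicate : FAtom n ar m → Option (Fin n)
    | .pred i _ _ => some i
    | .tat _ => none
  refine Finite.of_injective predicate fun a b hab => ?_
  cases a <;> cases b <;> simp_all [predicate]

theorem InClosure.closedUnderResolution (Γ : Set (Clause n ar m)) :
    ClosedUnderResolution {a | ¬ a.Small} {c | InClosure Γ c} := by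
  rintro (⟨i, h1, h2⟩ | h) ha γ hγ δ hδ hpos hneg
  · exact .res (h2.antisymm (not_lt.1 ha)) hγ hδ hpos hneg
  · exact absurd trivial ha

end Fluted

/-- Lemma 9.  Let `Γ` be a set of fluted `m`-clauses over `Σ ∪ {t}`
and let `τ⁻` be a fluted `m`-type over `Σ' ∪ {t}` (a truth-value assignment to the
atoms not involving non-distinguished predicates of maximal arity `m`).  If `τ⁻` is
consistent with `Γ°` (the clauses of the resolution closure `Γ*` containing no
non-distinguished predicate of arity `m`), then there is a fluted `m`-type `τ` over
`Σ ∪ {t}` extending `τ⁻` and consistent with `Γ`. -/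
theorem fluted_resolution_completeness {n m : ℕ} {ar : Fin n → ℕ}
    (Γ : Set (Clause n ar m))
    (τminus : {a : FAtom n ar m // a.Small} → Bool)
    (hcons : ∀ c : Clause n ar m, InClosure Γ c → (∀ l ∈ c, FAtom.Small (Prod.snd l)) →
      ∃ l ∈ c, ∃ h : FAtom.Small (Prod.snd l), τminus ⟨Prod.snd l, h⟩ = Prod.fst l) :
    ∃ τ : FAtom n ar m → Bool,
      (∀ (a : FAtom n ar m) (h : a.Small), τ a = τminus ⟨a, h⟩) ∧
      ∀ c ∈ Γ, ∃ l ∈ c, τ (Prod.snd l) = Prod.fst l := by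
  let v : FAtom n ar m → Bool := Function.extend Subtype.val τminus fun _ => true
  have v_eq (a : FAtom n ar m) (h : a.Small) : v a = τminus ⟨a, h⟩ :=
    Subtype.val_injective.extend_apply τminus _ ⟨a, h⟩
  have hv (c) (hc : InClosure Γ c) (hsmall : Avoids {a | ¬ a.Small} c) : Satisfies v c := by
    obtain ⟨l, hl, h, heq⟩ := hcons c hc fun l hl => not_not.1 (hsmall l hl)
    exact ⟨l, hl, (v_eq l.2 h).trans heq⟩
  obtain ⟨τ, hτv, hτ⟩ :=
    exists_eqOn_compl_satisfies (Set.toFinite _) (InClosure.closedUnderResolution Γ) hv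
  exact ⟨τ, fun a h => (hτv (not_not.2 h)).trans (v_eq a h), fun c hc => hτ c (.base hc)⟩

end FlutedResolution
end

section
/- Let φ be an FL²1T-formula (the two-variable fluted fragment with one distinguished transitive relation). If φ is satisfiable, then φ has a model of size at most triply exponential in the size of φ; hence the satisfiability problem for FL²1T is in 3-NEXPTIME. -/
/- STATEMENT 9: FL²1T has the triply exponential-sized model property (Lemma 12). -/
namespace FlutedOneTrans

/-- A fluted `m`-atom over the signature of predicates `Fin n` with arities `ar`,
together with the distinguished binary predicate `t`: either `p(x_{m-k+1},…,x_m)` for a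
predicate `p` of arity `k ≤ m`, or `t(x_{m-1},x_m)` (when `2 ≤ m`). -/
inductive FAtom (n : ℕ) (ar : Fin n → ℕ) (m : ℕ) : Type
  | pred (i : Fin n) (h : ar i ≤ m) : FAtom n ar m
  | tat (h : 2 ≤ m) : FAtom n ar m

/-- A structure interpreting the signature `(n, ar)` together with the distinguished
binary predicate `t`. -/
structure Str (n : ℕ) (ar : Fin n → ℕ) (A : Type) where
  R : ∀ i : Fin n, (Fin (ar i) → A) → Prop
  T : A → A → Prop

def FAtom.Sat {n : ℕ} {ar : Fin n → ℕ} {A : Type} (M : Str n ar A) {m : ℕ} :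
    FAtom n ar m → (Fin m → A) → Prop
  | .pred i h, v => M.R i (fun j => v ⟨m - ar i + j.val, by have := j.isLt; omega⟩)
  | .tat h, v => M.T (v ⟨m - 2, by omega⟩) (v ⟨m - 1, by omega⟩)

def FAtom.size {n : ℕ} {ar : Fin n → ℕ} {m : ℕ} : FAtom n ar m → ℕ
  | .pred i _ => ar i + 1
  | .tat _ => 3

/-- Fluted formulas over `(n, ar)` together with `t`; the index `m` records that the
free variables form a suffix of `x₁, …, x_m`, atoms ending at the last variable. -/
inductive FL (n : ℕ) (ar : Fin n → ℕ) : ℕ → Type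
  | atom {m : ℕ} (a : FAtom n ar m) : FL n ar m
  | fls {m : ℕ} : FL n ar m
  | not {m : ℕ} (φ : FL n ar m) : FL n ar m
  | and {m : ℕ} (φ ψ : FL n ar m) : FL n ar m
  | or {m : ℕ} (φ ψ : FL n ar m) : FL n ar m
  | ex {m : ℕ} (φ : FL n ar (m + 1)) : FL n ar m
  | all {m : ℕ} (φ : FL n ar (m + 1)) : FL n ar m

def FL.Sat {n : ℕ} {ar : Fin n → ℕ} {A : Type} (M : Str n ar A) :
    ∀ {m : ℕ}, FL n ar m → (Fin m → A) → Prop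
  | _, .atom a, v => FAtom.Sat M a v
  | _, .fls, _ => False
  | _, .not φ, v => ¬ FL.Sat M φ v
  | _, .and φ ψ, v => FL.Sat M φ v ∧ FL.Sat M ψ v
  | _, .or φ ψ, v => FL.Sat M φ v ∨ FL.Sat M ψ v
  | _, .ex φ, v => ∃ a : A, FL.Sat M φ (Fin.snoc v a)
  | _, .all φ, v => ∀ a : A, FL.Sat M φ (Fin.snoc v a)

def FL.size {n : ℕ} {ar : Fin n → ℕ} : ∀ {m : ℕ}, FL n ar m → ℕ
  | _, .atom a => a.size
  | _, .fls => 1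
  | _, .not φ => FL.size φ + 1
  | _, .and φ ψ => FL.size φ + FL.size ψ + 1
  | _, .or φ ψ => FL.size φ + FL.size ψ + 1
  | _, .ex φ => FL.size φ + 1
  | _, .all φ => FL.size φ + 1

/-- The largest variable index featured in a fluted formula: a sentence `φ : FL n ar 0`
belongs to the `m`-variable fluted fragment `FL^m1T` iff `FL.depth φ ≤ m`. -/
def FL.depth {n : ℕ} {ar : Fin n → ℕ} : ∀ {m : ℕ}, FL n ar m → ℕ
  | m, .atom _ => m
  | m, .fls => m
  | _, .not φ => FL.depth φ
  | _, .and φ ψ => max (FL.depth φ) (FL.depth ψ)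
  | _, .or φ ψ => max (FL.depth φ) (FL.depth ψ)
  | _, .ex φ => FL.depth φ
  | _, .all φ => FL.depth φ

/-- Satisfaction of a fluted sentence. -/
def SatSent {n : ℕ} {ar : Fin n → ℕ} {A : Type} (M : Str n ar A) (φ : FL n ar 0) : Prop :=
  FL.Sat M φ (fun i => i.elim0)

/-- `φ` is satisfiable in a structure interpreting `t` as a transitive relation. -/
def SatisfiableT {n : ℕ} {ar : Fin n → ℕ} (φ : FL n ar 0) : Prop :=
  ∃ (A : Type) (_ : Nonempty A) (M : Str n ar A), Transitive M.T ∧ SatSent M φ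

/-- A fluted `m`-literal. -/
abbrev Lit (n : ℕ) (ar : Fin n → ℕ) (m : ℕ) := Bool × FAtom n ar m

/-- A fluted `m`-clause: a disjunction of fluted `m`-literals. -/
abbrev Clause (n : ℕ) (ar : Fin n → ℕ) (m : ℕ) := List (Lit n ar m)

def Clause.Sat {n : ℕ} {ar : Fin n → ℕ} {A : Type} (M : Str n ar A) {m : ℕ}
    (c : Clause n ar m) (v : Fin m → A) : Prop :=
  ∃ l ∈ c, (if l.1 then FAtom.Sat M l.2 v else ¬ FAtom.Sat M l.2 v)

def Clause.size {n : ℕ} {ar : Fin n → ℕ} {m : ℕ} (c : Clause n ar m) : ℕ :=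
  (c.map fun l => FAtom.size l.2 + 1).sum + 1

/-- A formula of `FL^{k+1}1T` in clause normal form:
`∀x₁⋯x_{k+1}.Ω ∧ ⋀ᵢ ∀x₁⋯x_k(αᵢ → ∃x_{k+1}.Γᵢ) ∧ ⋀ⱼ ∀x₁⋯x_k(βⱼ → ∀x_{k+1}.Δⱼ)`,
where `Ω`, the `Γᵢ` and the `Δⱼ` are sets of fluted `(k+1)`-clauses and the `αᵢ`, `βⱼ`
are fluted `k`-atoms. -/
structure CNF (n : ℕ) (ar : Fin n → ℕ) (k : ℕ) where
  static : List (Clause n ar (k + 1))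
  exCon : List (FAtom n ar k × List (Clause n ar (k + 1)))
  allCon : List (FAtom n ar k × List (Clause n ar (k + 1)))

def CNF.Sat {n : ℕ} {ar : Fin n → ℕ} {k : ℕ} {A : Type} (M : Str n ar A)
    (φ : CNF n ar k) : Prop :=
  (∀ v : Fin (k + 1) → A, ∀ c ∈ φ.static, Clause.Sat M c v) ∧
  (∀ g ∈ φ.exCon, ∀ v : Fin k → A, FAtom.Sat M g.1 v →
    ∃ a : A, ∀ c ∈ g.2, Clause.Sat M c (Fin.snoc v a)) ∧
  (∀ g ∈ φ.allCon, ∀ v : Fin k → A, FAtom.Sat M g.1 v →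
    ∀ a : A, ∀ c ∈ g.2, Clause.Sat M c (Fin.snoc v a))

def CNF.size {n : ℕ} {ar : Fin n → ℕ} {k : ℕ} (φ : CNF n ar k) : ℕ :=
  (φ.static.map Clause.size).sum +
  (φ.exCon.map fun g => FAtom.size g.1 + (g.2.map Clause.size).sum + 1).sum +
  (φ.allCon.map fun g => FAtom.size g.1 + (g.2.map Clause.size).sum + 1).sum + 1

/-- `φ` (a clause-normal-form formula) is satisfiable with `t` transitive. -/
def CNF.SatisfiableT {n : ℕ} {ar : Fin n → ℕ} {k : ℕ} (φ : CNF n ar k) : Prop :=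
  ∃ (A : Type) (_ : Nonempty A) (M : Str n ar A), Transitive M.T ∧ CNF.Sat M φ

/-- Renaming of predicates along an arity-preserving signature inclusion. -/
def FAtom.lift {n n' : ℕ} {ar : Fin n → ℕ} {ar' : Fin n' → ℕ} (ι : Fin n → Fin n')
    (hι : ∀ i, ar' (ι i) = ar i) {m : ℕ} : FAtom n ar m → FAtom n' ar' m
  | .pred i h => .pred (ι i) (by rw [hι i]; exact h)
  | .tat h => .tat h

def FL.lift {n n' : ℕ} {ar : Fin n → ℕ} {ar' : Fin n' → ℕ} (ι : Fin n → Fin n')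
    (hι : ∀ i, ar' (ι i) = ar i) : ∀ {m : ℕ}, FL n ar m → FL n' ar' m
  | _, .atom a => .atom (FAtom.lift ι hι a)
  | _, .fls => .fls
  | _, .not φ => .not (FL.lift ι hι φ)
  | _, .and φ ψ => .and (FL.lift ι hι φ) (FL.lift ι hι ψ)
  | _, .or φ ψ => .or (FL.lift ι hι φ) (FL.lift ι hι ψ)
  | _, .ex φ => .ex (FL.lift ι hι φ)
  | _, .all φ => .all (FL.lift ι hι φ)

/-!
Quantifying one variable after the other, always along the order of the variables, a two-variable
fluted sentence can only ask which pairs of a 1-type and a star are realized, the star of `a` being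
the set of 2-types of the pairs `(a, b)`. There are finitely many such pairs, and one would like to
keep one representative of each and rebuild its star. The obstacle is transitivity of `t`: a star
may call for both a related and an unrelated element of the same kind.

Refine the kinds by the 1-types found above, found below, and dominated. Then `t` is *forced*
between two kinds if some 1-type dominated by the first occurs at or below the second, and
*allowed* if the refined data are ordered as transitivity demands. Allowed composed with forced, in
either order, is forced. Hence, on two copies of the set of kinds, relating all forced pairs and
those allowed pairs that lie in the same copy is again transitive, and an element that needs an
unrelated partner finds it in the other copy.
-/

section TransitiveCovers

variable {A B C S : Type*} (T : A → A → Prop) (color : A → C)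

/-- The colors occurring strictly above `a`, that is, on its `T`-successors. -/
def upperColors (a : A) : Set C := color '' {b | T a b}

/-- The colors occurring strictly below `a`, that is, on its `T`-predecessors. -/
def lowerColors (a : A) : Set C := color '' {b | T b a}

/-- The colors all of whose bearers are `T`-successors of `a`. -/
def dominatedColors (a : A) : Set C := {u | ∀ b, color b = u → T a b}

/-- A color together with the sets of upper, lower and dominated colors, in this order. -/
abbrev Profile (C : Type*) : Type _ := C × Set C × Set C × Set C

/-- The color data by which `Forced` and `Allowed` see an element. -/
def profile (a : A) : Profile C :=
  (color a, upperColors T color a, lowerColors T color a, dominatedColors T color a)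

/-- The colors around `a` and `b` alone imply `T a b`: some color dominated by `a` occurs at or
below `b`. -/
def Forced (a b : A) : Prop :=
  (dominatedColors T color a ∩ insert (color b) (lowerColors T color b)).Nonempty

/-- The colors around `a` and `b` are consistent with `T a b`, for `T` transitive. -/
structure Allowed (a b : A) : Prop where
  upper : insert (color b) (upperColors T color b) ⊆ upperColors T color a
  lower : insert (color a) (lowerColors T color a) ⊆ lowerColors T color b
  dominated : dominatedColors T color b ⊆ dominatedColors T color a

variable {T color} {a b c : A}

theorem Forced.congr_right (hab : Forced T color a b) (h : profile T color b = profile T color c) :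
    Forced T color a c := by
  simp only [profile, Prod.mk.injEq] at h
  simpa only [Forced, h] using hab

theorem Allowed.congr_right (hab : Allowed T color a b)
    (h : profile T color b = profile T color c) : Allowed T color a c := by
  obtain ⟨hcolor, hupper, hlower, hdominated⟩ : _ ∧ _ ∧ _ ∧ _ := by
    simpa only [profile, Prod.mk.injEq] using h
  exact ⟨hcolor ▸ hupper ▸ hab.upper, hlower ▸ hab.lower, hdominated ▸ hab.dominated⟩

theorem Allowed.trans (hab : Allowed T color a b) (hbc : Allowed T color b c) :
    Allowed T color a c where
  upper := hbc.upper.trans ((Set.subset_insert _ _).trans hab.upper)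
  lower := hab.lower.trans ((Set.subset_insert _ _).trans hbc.lower)
  dominated := hbc.dominated.trans hab.dominated

theorem Forced.trans_allowed (hab : Forced T color a b) (hbc : Allowed T color b c) :
    Forced T color a c :=
  hab.mono (Set.inter_subset_inter_right _ (hbc.lower.trans (Set.subset_insert _ _)))

theorem Allowed.trans_forced (hab : Allowed T color a b) (hbc : Forced T color b c) :
    Forced T color a c :=
  hbc.mono (Set.inter_subset_inter_left _ hab.dominated)

theorem Allowed.of_rel [IsTrans A T] (hab : T a b) : Allowed T color a b where
  upper := Set.insert_subset ⟨b, hab, rfl⟩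
    (Set.image_mono fun _ hbc => _root_.trans hab hbc)
  lower := Set.insert_subset ⟨a, hab, rfl⟩
    (Set.image_mono fun _ hca => _root_.trans hca hab)
  dominated _ hu c hc := _root_.trans hab (hu c hc)

theorem Forced.rel [IsTrans A T] (hab : Forced T color a b) : T a b := by
  obtain ⟨u, hu, rfl | ⟨c, hcb, rfl⟩⟩ := hab
  · exact hu b rfl
  · exact _root_.trans (hu c rfl) hcb

variable (T color) (π : B → A) (side : B → S)

/-- A relation on a cover `π : B → A`: forced pairs are related, and of the others the allowed
ones on the same side. -/
def sidedRel (x y : B) : Prop :=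
  Forced T color (π x) (π y) ∨ side x = side y ∧ Allowed T color (π x) (π y)

variable {T color π side} [IsTrans A T] {x y : B}

theorem sidedRel.allowed (h : sidedRel T color π side x y) : Allowed T color (π x) (π y) :=
  h.elim (fun h => .of_rel h.rel) And.right

instance : IsTrans B (sidedRel T color π side) where
  trans _ _ _
    | .inl hxy, hyz => .inl (hxy.trans_allowed hyz.allowed)
    | .inr hxy, .inl hyz => .inl (hxy.2.trans_forced hyz)
    | .inr hxy, .inr hyz => .inr ⟨hxy.1.trans hyz.1, hxy.2.trans hyz.2⟩

theorem exists_rel_iff_sidedRel (x y : B) :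
    ∃ b, color b = color (π y) ∧ (T (π x) b ↔ sidedRel T color π side x y) := by
  by_cases hxy : sidedRel T color π side x y
  · obtain ⟨b, hb, hby⟩ := hxy.allowed.upper (Set.mem_insert _ _)
    exact ⟨b, hby, iff_of_true hb hxy⟩
  · have hnot : color (π y) ∉ dominatedColors T color (π x) :=
      fun hy => hxy (.inl ⟨_, hy, Set.mem_insert _ _⟩)
    obtain ⟨b, hby, hb⟩ : ∃ b, color b = color (π y) ∧ ¬ T (π x) b := by
      simpa [dominatedColors] using hnot
    exact ⟨b, hby, iff_of_false hb hxy⟩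

theorem sidedRel_iff_rel (hb : profile T color (π y) = profile T color b)
    (hside : side x = side y ↔ T (π x) b) : sidedRel T color π side x y ↔ T (π x) b := by
  constructor
  · rintro (hforced | ⟨hxy, -⟩)
    · exact (hforced.congr_right hb).rel
    · exact hside.1 hxy
  · exact fun h => .inr ⟨hside.2 h, (Allowed.of_rel h).congr_right hb.symm⟩

end TransitiveCovers

variable {n : ℕ} {ar : Fin n → ℕ} {m : ℕ}

section Types

variable {A : Type}

/-- The fluted `m`-type of a tuple: the fluted `m`-atoms true of it. -/
def Str.typ (M : Str n ar A) (v : Fin m → A) : Set (FAtom n ar m) := {a | a.Sat M v}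

/-- The same atom, with every variable index raised by one. -/
def FAtom.shift : FAtom n ar m → FAtom n ar (m + 1)
  | .pred i h => .pred i (h.trans m.le_succ)
  | .tat h => .tat (h.trans m.le_succ)

theorem FAtom.sat_shift (M : Str n ar A) (a : FAtom n ar m) (v : Fin (m + 1) → A) :
    a.shift.Sat M v ↔ a.Sat M (Fin.tail v) := by
  cases a with
  | pred i h =>
    have hindex (j : ℕ) : m + 1 - ar i + j = m - ar i + j + 1 := by omega
    simp only [shift, Sat, Fin.tail, Fin.succ_mk, hindex]
  | tat h =>
    have hindex : m + 1 - 2 = m - 2 + 1 := by omega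
    have hlast : m + 1 - 1 = m - 1 + 1 := by omega
    simp only [shift, Sat, Fin.tail, Fin.succ_mk, hindex, hlast]

theorem Str.preimage_shift_typ (M : Str n ar A) (v : Fin (m + 1) → A) :
    FAtom.shift ⁻¹' M.typ v = M.typ (Fin.tail v) :=
  Set.ext fun a => a.sat_shift M v

/-- The fluted 2-types that `a` realizes as first element. -/
def Str.star (M : Str n ar A) (a : A) : Set (Set (FAtom n ar 2)) :=
  Set.range fun b => M.typ ![a, b]

/-- All that the two-variable fluted fragment can express about `a`. -/
def Str.localTyp (M : Str n ar A) (a : A) : Set (FAtom n ar 1) × Set (Set (FAtom n ar 2)) :=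
  (M.typ ![a], M.star a)

end Types

section BackAndForth

variable {A B : Type}

theorem FL.le_depth (φ : FL n ar m) : m ≤ φ.depth := by
  induction φ with
  | atom | fls => exact le_rfl
  | not _ ih => exact ih
  | and _ _ ih _ | or _ _ ih _ => exact ih.trans (le_max_left _ _)
  | ex _ ih | all _ ih => exact (Nat.le_succ _).trans ih

theorem FL.exists_eq_succ_of_depth_le {k : ℕ} {φ : FL n ar (m + 1)} (hφ : φ.depth ≤ m + k) :
    ∃ l, k = l + 1 ∧ φ.depth ≤ m + 1 + l := by
  have hk := φ.le_depth.trans hφ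
  exact ⟨k - 1, by omega, by omega⟩

/-- The `k`-round Ehrenfeucht–Fraïssé equivalence of tuples for the fluted fragment: only the last
position is ever extended, and only fluted types are compared. -/
def FlutedEquiv (M : Str n ar A) (N : Str n ar B) :
    ℕ → ∀ {m : ℕ}, (Fin m → A) → (Fin m → B) → Prop
  | 0, _, v, w => M.typ v = N.typ w
  | k + 1, m, v, w => M.typ v = N.typ w ∧
      (∀ a, ∃ b, FlutedEquiv M N k (m := m + 1) (Fin.snoc v a) (Fin.snoc w b)) ∧
      ∀ b, ∃ a, FlutedEquiv M N k (m := m + 1) (Fin.snoc v a) (Fin.snoc w b)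

variable {M : Str n ar A} {N : Str n ar B}

theorem FlutedEquiv.typ_eq {k : ℕ} {v : Fin m → A} {w : Fin m → B} (h : FlutedEquiv M N k v w) :
    M.typ v = N.typ w := by
  cases k with
  | zero => exact h
  | succ => exact h.1

theorem FlutedEquiv.sat_iff {k : ℕ} {φ : FL n ar m} {v : Fin m → A} {w : Fin m → B}
    (h : FlutedEquiv M N k v w) (hφ : φ.depth ≤ m + k) : φ.Sat M v ↔ φ.Sat N w := by
  induction φ generalizing k with
  | atom a => exact Set.ext_iff.1 h.typ_eq a
  | fls => exact Iff.rfl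
  | not φ ih => exact not_congr (ih h hφ)
  | and φ ψ ihφ ihψ =>
    exact and_congr (ihφ h (le_of_max_le_left hφ)) (ihψ h (le_of_max_le_right hφ))
  | or φ ψ ihφ ihψ =>
    exact or_congr (ihφ h (le_of_max_le_left hφ)) (ihψ h (le_of_max_le_right hφ))
  | ex φ ih =>
    obtain ⟨k, rfl, hdepth⟩ := FL.exists_eq_succ_of_depth_le hφ
    obtain ⟨-, forth, back⟩ := h
    exact ⟨fun ⟨a, ha⟩ => (forth a).imp fun b hb => (ih hb hdepth).1 ha,
      fun ⟨b, hb⟩ => (back b).imp fun a ha => (ih ha hdepth).2 hb⟩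
  | all φ ih =>
    obtain ⟨k, rfl, hdepth⟩ := FL.exists_eq_succ_of_depth_le hφ
    obtain ⟨-, forth, back⟩ := h
    exact ⟨fun hA b => (back b).elim fun a ha => (ih ha hdepth).1 (hA a),
      fun hB a => (forth a).elim fun b hb => (ih hb hdepth).2 (hB b)⟩

theorem snoc_singleton {X : Type*} (x y : X) : (Fin.snoc ![x] y : Fin 2 → X) = ![x, y] := by
  ext i
  fin_cases i <;> rfl

theorem FlutedEquiv.of_localTyp_eq {a : A} {b : B} (h : M.localTyp a = N.localTyp b) :
    FlutedEquiv M N 1 ![a] ![b] := by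
  obtain ⟨htyp, hstar⟩ : M.typ ![a] = N.typ ![b] ∧ M.star a = N.star b := Prod.ext_iff.1 h
  refine ⟨htyp, fun a' => ?_, fun b' => ?_⟩
  · obtain ⟨b', hb'⟩ : M.typ ![a, a'] ∈ N.star b := hstar.subset ⟨a', rfl⟩
    exact ⟨b', by simpa only [FlutedEquiv, snoc_singleton] using hb'.symm⟩
  · obtain ⟨a', ha'⟩ : N.typ ![b, b'] ∈ M.star a := hstar.superset ⟨b', rfl⟩
    exact ⟨a', by simpa only [FlutedEquiv, snoc_singleton] using ha'⟩

theorem FlutedEquiv.of_range_localTyp_eq [Nonempty A]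
    (h : Set.range M.localTyp = Set.range N.localTyp) (v : Fin 0 → A) (w : Fin 0 → B) :
    FlutedEquiv M N 2 v w := by
  have extend {a : A} {b : B} (hab : M.localTyp a = N.localTyp b) :
      FlutedEquiv M N 1 (m := 1) (Fin.snoc v a) (Fin.snoc w b) := by
    simpa only [Fin.snoc_zero, Matrix.vec_single_eq_const] using FlutedEquiv.of_localTyp_eq hab
  have forth (a : A) : ∃ b, M.localTyp a = N.localTyp b :=
    (h.subset (Set.mem_range_self a)).imp fun _ => Eq.symm
  have back (b : B) : ∃ a, M.localTyp a = N.localTyp b :=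
    h.superset (Set.mem_range_self b)
  refine ⟨?_, fun a => (forth a).imp fun _ => extend, fun b => (back b).imp fun _ => extend⟩
  obtain ⟨a⟩ := ‹Nonempty A›
  obtain ⟨b, hab⟩ := forth a
  calc M.typ v = M.typ (Fin.tail ![a]) := by rw [Subsingleton.elim (α := Fin 0 → A) v]
    _ = FAtom.shift ⁻¹' M.typ ![a] := (M.preimage_shift_typ _).symm
    _ = FAtom.shift ⁻¹' N.typ ![b] := congrArg (FAtom.shift ⁻¹' ·.1) hab
    _ = N.typ (Fin.tail ![b]) := N.preimage_shift_typ _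
    _ = N.typ w := by rw [Subsingleton.elim (α := Fin 0 → B) w]

theorem satSent_iff_of_range_localTyp_eq [Nonempty A]
    (h : Set.range M.localTyp = Set.range N.localTyp) {φ : FL n ar 0} (hφ : φ.depth ≤ 2) :
    SatSent M φ ↔ SatSent N φ :=
  (FlutedEquiv.of_range_localTyp_eq h _ _).sat_iff (by rwa [zero_add])

end BackAndForth

section Realization

variable {A B : Type}

/-- The structure on a cover `π : B → A` with prescribed 2-types `τ` and with all predicates of
arity other than 2 pulled back along `π`. -/
def Str.ofTypes (M : Str n ar A) (π : B → A) (τ : B → B → Set (FAtom n ar 2)) : Str n ar B where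
  R i v := if h : ar i = 2 then .pred i h.le ∈ τ (v ⟨0, by omega⟩) (v ⟨1, by omega⟩)
    else M.R i (π ∘ v)
  T x y := .tat le_rfl ∈ τ x y

variable (M : Str n ar A) (π : B → A) {τ : B → B → Set (FAtom n ar 2)}

theorem Str.typ_ofTypes_singleton (x : B) : (M.ofTypes π τ).typ ![x] = M.typ ![π x] := by
  ext a
  cases a with
  | pred i h =>
    have hi : ar i ≠ 2 := by omega
    simp only [typ, Set.mem_ofPred_eq, FAtom.Sat, ofTypes, dif_neg hi, Function.comp_def,
      Matrix.cons_val_fin_one]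
  | tat h => omega

theorem Str.typ_ofTypes_pair {x y : B} (hτ : FAtom.shift ⁻¹' τ x y = M.typ ![π y]) :
    (M.ofTypes π τ).typ ![x, y] = τ x y := by
  ext a
  cases a with
  | pred i h =>
    rcases h.eq_or_lt with hi | hi
    · simp only [typ, Set.mem_ofPred_eq, FAtom.Sat, ofTypes, hi]
      rfl
    · have hunary : ar i ≤ 1 := Nat.le_of_lt_succ hi
      calc (FAtom.pred i hunary).shift.Sat (M.ofTypes π τ) ![x, y]
          ↔ FAtom.pred i hunary ∈ (M.ofTypes π τ).typ ![y] := FAtom.sat_shift _ _ _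
        _ ↔ FAtom.pred i hunary ∈ FAtom.shift ⁻¹' τ x y := by rw [typ_ofTypes_singleton, hτ]
  | tat h => exact Iff.rfl

end Realization

section FiniteCover

variable {A : Type} (M : Str n ar A)

/-- The color by which the distinguished relation is analyzed: the fluted 1-type. -/
def Str.color (a : A) : Set (FAtom n ar 1) := M.typ ![a]

/-- The data about an element that the small model retains: its profile and its star. -/
abbrev Kind (n : ℕ) (ar : Fin n → ℕ) : Type :=
  Profile (Set (FAtom n ar 1)) × Set (Set (FAtom n ar 2))

/-- The kind of an element of `M`. -/
def Str.kind (a : A) : Kind n ar := (profile M.T M.color a, M.star a)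

theorem Str.localTyp_eq_of_kind_eq {M : Str n ar A} {a b : A} (h : M.kind a = M.kind b) :
    M.localTyp a = M.localTyp b :=
  Prod.ext (congrArg (·.1.1) h) (congrArg (·.2) h)

/-- The domain of the small model: every realized kind occurs once for each side and each 2-type
`incoming`. An element prefers to be reached by its incoming 2-type, so that all 2-types of a star
can be realized although a kind has only one representative in `M`. -/
structure Str.Cover where
  kind : Set.range M.kind
  side : Bool
  incoming : Set (FAtom n ar 2)

namespace Str.Cover

variable {M}

instance [Nonempty A] : Nonempty M.Cover :=
  ‹Nonempty A›.map fun a => ⟨⟨M.kind a, a, rfl⟩, true, ∅⟩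

/-- A chosen element of the kind that `x` stands for. -/
noncomputable def rep (x : M.Cover) : A := Set.rangeSplitting M.kind x.kind

theorem kind_rep (x : M.Cover) : M.kind x.rep = x.kind :=
  Set.apply_rangeSplitting M.kind x.kind

/-- The distinguished relation of the small model. -/
def rel : M.Cover → M.Cover → Prop := sidedRel M.T M.color rep side

/-- The 2-types realized by `x.rep` as first element that fit the pair `x`, `y`. -/
def admissible (x y : M.Cover) : Set (Set (FAtom n ar 2)) :=
  {t ∈ M.star x.rep | FAtom.shift ⁻¹' t = M.typ ![y.rep] ∧ (.tat le_rfl ∈ t ↔ rel x y)}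

theorem typ_mem_admissible {x y : M.Cover} {b : A} (hcolor : M.color b = M.color y.rep)
    (hrel : M.T x.rep b ↔ rel x y) : M.typ ![x.rep, b] ∈ admissible x y :=
  ⟨⟨b, rfl⟩, (M.preimage_shift_typ _).trans hcolor, hrel⟩

variable [IsTrans A M.T]

theorem admissible_nonempty (x y : M.Cover) : (admissible x y).Nonempty := by
  obtain ⟨b, hcolor, hrel⟩ := exists_rel_iff_sidedRel (T := M.T) (color := M.color) x y
  exact ⟨_, typ_mem_admissible hcolor hrel⟩

open Classical in
/-- The 2-type of `x` and `y` in the small model. -/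
noncomputable def pairTyp (x y : M.Cover) : Set (FAtom n ar 2) :=
  if y.incoming ∈ admissible x y then y.incoming else (admissible_nonempty x y).some

theorem pairTyp_mem (x y : M.Cover) : pairTyp x y ∈ admissible x y := by
  unfold pairTyp
  split_ifs with h
  · exact h
  · exact (admissible_nonempty x y).some_mem

theorem exists_pairTyp_eq (x : M.Cover) (b : A) :
    ∃ y, pairTyp x y = M.typ ![x.rep, b] := by
  classical
  let y : M.Cover :=
    ⟨⟨M.kind b, b, rfl⟩, if M.T x.rep b then x.side else !x.side, M.typ ![x.rep, b]⟩
  have hprofile : profile M.T M.color y.rep = profile M.T M.color b :=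
    congrArg Prod.fst (kind_rep y)
  have hside : x.side = y.side ↔ M.T x.rep b := by
    by_cases h : M.T x.rep b <;> simp [y, h]
  have hmem : y.incoming ∈ admissible x y :=
    typ_mem_admissible (congrArg Prod.fst hprofile).symm
      (sidedRel_iff_rel hprofile hside).symm
  exact ⟨y, if_pos hmem⟩

variable (M) in
/-- The small model, which realizes exactly the local types of `M`. -/
noncomputable def str : Str n ar M.Cover := M.ofTypes rep pairTyp

theorem typ_str_pair (x y : M.Cover) : (str M).typ ![x, y] = pairTyp x y :=
  M.typ_ofTypes_pair rep (pairTyp_mem x y).2.1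

theorem star_str (x : M.Cover) : (str M).star x = M.star x.rep := by
  apply Set.Subset.antisymm
  · rintro _ ⟨y, rfl⟩
    simpa only [typ_str_pair] using (pairTyp_mem x y).1
  · rintro _ ⟨b, rfl⟩
    obtain ⟨y, hy⟩ := exists_pairTyp_eq x b
    exact ⟨y, (typ_str_pair x y).trans hy⟩

theorem localTyp_str (x : M.Cover) : (str M).localTyp x = M.localTyp x.rep :=
  Prod.ext (M.typ_ofTypes_singleton rep x) (star_str x)

variable (M)

theorem range_localTyp_str : Set.range (str M).localTyp = Set.range M.localTyp := by
  apply Set.Subset.antisymm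
  · rintro _ ⟨x, rfl⟩
    exact ⟨x.rep, (localTyp_str x).symm⟩
  · rintro _ ⟨a, rfl⟩
    let x : M.Cover := ⟨⟨M.kind a, a, rfl⟩, true, ∅⟩
    exact ⟨x, (localTyp_str x).trans (localTyp_eq_of_kind_eq (kind_rep x))⟩

theorem str_T : (str M).T = rel :=
  funext₂ fun x y => propext (pairTyp_mem x y).2.2

instance : IsTrans M.Cover (str M).T := by
  rw [str_T]
  exact inferInstanceAs (IsTrans _ (sidedRel M.T M.color rep side))

end Str.Cover

end FiniteCover

section Cardinality

/-- The predicate of an atom, `none` standing for `t`; it determines the atom. -/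
def FAtom.symbol : FAtom n ar m → Option (Fin n)
  | .pred i _ => some i
  | .tat _ => none

theorem FAtom.symbol_injective : Function.Injective (symbol : FAtom n ar m → Option (Fin n))
  | .pred _ _, .pred _ _, rfl => rfl
  | .tat _, .tat _, _ => rfl

instance : Finite (FAtom n ar m) := .of_injective _ FAtom.symbol_injective

theorem FAtom.card_le : Nat.card (FAtom n ar m) ≤ n + 1 := by
  simpa only [Finite.card_option, Nat.card_fin] using
    Nat.card_le_card_of_injective _ (FAtom.symbol_injective (m := m) (ar := ar))

theorem card_set {X : Type*} [Finite X] : Nat.card (Set X) = 2 ^ Nat.card X := by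
  have := Fintype.ofFinite X
  simp only [Nat.card_eq_fintype_card, Fintype.card_set]

variable {A : Type} (M : Str n ar A)

theorem Str.Cover.toProd_injective :
    Function.Injective fun x : M.Cover => ((x.kind : Kind n ar), x.side, x.incoming) := by
  rintro ⟨⟨_, _⟩, _, _⟩ ⟨⟨_, _⟩, _, _⟩ h
  simpa only [Prod.mk.injEq, Str.Cover.mk.injEq, Subtype.mk.injEq] using h

instance : Finite M.Cover := .of_injective _ (Str.Cover.toProd_injective M)

theorem Str.Cover.card_le : Nat.card M.Cover ≤ 2 ^ 2 ^ (n + 4) := by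
  set p := Nat.card (FAtom n ar 1) with hp
  set q := Nat.card (FAtom n ar 2) with hq
  have hcard : Nat.card (Kind n ar × Bool × Set (FAtom n ar 2)) =
      2 ^ (p + 3 * 2 ^ p + 2 ^ q + 1 + q) := by
    simp only [Nat.card_prod, card_set, Nat.card_eq_fintype_card (α := Bool), Fintype.card_bool,
      ← hp, ← hq]
    ring
  have hpn : p ≤ n + 1 := FAtom.card_le
  have hqn : q ≤ n + 1 := FAtom.card_le
  calc Nat.card M.Cover ≤ 2 ^ (p + 3 * 2 ^ p + 2 ^ q + 1 + q) :=
        hcard ▸ Nat.card_le_card_of_injective _ (toProd_injective M)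
    _ ≤ 2 ^ (2 * (n + 2) + 4 * 2 ^ (n + 1)) := by
        have hp2 : 2 ^ p ≤ 2 ^ (n + 1) := Nat.pow_le_pow_right two_pos hpn
        have hq2 : 2 ^ q ≤ 2 ^ (n + 1) := Nat.pow_le_pow_right two_pos hqn
        exact Nat.pow_le_pow_right two_pos (by omega)
    _ ≤ 2 ^ 2 ^ (n + 4) := by
        have hn : n + 2 ≤ 2 ^ (n + 2) := Nat.lt_two_pow_self.le
        exact Nat.pow_le_pow_right two_pos (by simp only [pow_succ] at hn ⊢; omega)

end Cardinality

theorem flutedTwoVarOneTrans_triply_exponential_model_property_general {A : Type} [Nonempty A]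
    (M : Str n ar A) [IsTrans A M.T] :
    ∃ (B : Type) (_ : Nonempty B) (_ : Fintype B) (N : Str n ar B), IsTrans B N.T ∧
      (∀ φ : FL n ar 0, φ.depth ≤ 2 → (SatSent N φ ↔ SatSent M φ)) ∧
      Fintype.card B ≤ 2 ^ 2 ^ (n + 4) := by
  let _ := Fintype.ofFinite M.Cover
  refine ⟨M.Cover, inferInstance, inferInstance, Str.Cover.str M, inferInstance, fun φ hφ => ?_, ?_⟩
  · exact satSent_iff_of_range_localTyp_eq (Str.Cover.range_localTyp_str M) hφ
  · exact Nat.card_eq_fintype_card.symm.trans_le (Str.Cover.card_le M)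

/-- Lemma 12.  If an FL²1T-formula `φ` (two variables, one
distinguished transitive relation, arbitrary non-distinguished predicates) is
satisfiable, then it has a model of size at most triply exponential in the size of `φ`
(the size of a formula over the signature `(n, ar)` being measured by `n + FL.size φ`).
Hence the satisfiability problem for FL²1T is in 3-NEXPTIME. -/
theorem flutedTwoVarOneTrans_triply_exponential_model_property :
    ∃ c : ℕ, ∀ (n : ℕ) (ar : Fin n → ℕ) (φ : FL n ar 0), FL.depth φ ≤ 2 →
      SatisfiableT φ →
      ∃ (A : Type) (_ : Nonempty A) (_ : Fintype A) (M : Str n ar A),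
        Transitive M.T ∧ SatSent M φ ∧
        Fintype.card A ≤ 2 ^ 2 ^ 2 ^ (c * (n + FL.size φ + 1)) := by
  refine ⟨4, fun n ar φ hφ ⟨A, _, M, hT, hM⟩ => ?_⟩
  have : IsTrans A M.T := ⟨fun _ _ _ hab hbc => hT hab hbc⟩
  obtain ⟨B, hB, hfin, N, hN, hequiv, hcard⟩ :=
    flutedTwoVarOneTrans_triply_exponential_model_property_general M
  have hexp : n + 4 ≤ 2 ^ (4 * (n + FL.size φ + 1)) :=
    (by omega : n + 4 ≤ 4 * (n + FL.size φ + 1)).trans Nat.lt_two_pow_self.le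
  exact ⟨B, hB, hfin, N, fun _ _ _ => hN.trans _ _ _, (hequiv φ hφ).2 hM,
    hcard.trans (by gcongr <;> norm_num)⟩

end FlutedOneTrans
end
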